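/- arXiv:1906.10722 — 4 statements merged into one kernel-verified Lean document; each statement's English description precedes it below -/
import Mathlib

section
/- Let T be the set of all tuples (b₁,…,b₆) ∈ ℤ⁶ with b₁, b₂, b₅, b₆ ≥ 2 such that the matrix M(b) is positive definite and det M(b) = 1. Then T has exactly 312 elements. Moreover, T is invariant under the group of order 8 generated by the three involutions (b₁,b₂,b₃,b₄,b₅,b₆) ↦ (b₂,b₁,b₃,b₄,b₅,b₆), (b₁,b₂,b₃,b₄,b₅,b₆) ↦ (b₁,b₂,b₃,b₄,b₆,b₅), and (b₁,b₂,b₃,b₄,b₅,b₆) ↦ (b₅,b₆,b₄,b₃,b₁,b₂), and under this action T decomposes into exactly 39 orbits. -/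
/-- The linking matrix of the `H`-graph: diagonal entries `b₁,…,b₆`, entries `-1`
in positions (1,3),(3,1),(2,3),(3,2),(3,4),(4,3),(4,5),(5,4),(4,6),(6,4)
(1-based indexing), and `0` elsewhere. -/
def Mb (b : Fin 6 → ℤ) : Matrix (Fin 6) (Fin 6) ℤ :=
  !![b 0,    0,   -1,    0,    0,    0;
        0, b 1,   -1,    0,    0,    0;
       -1,   -1, b 2,   -1,    0,    0;
        0,    0,   -1, b 3,   -1,   -1;
        0,    0,    0,   -1, b 4,    0;
        0,    0,    0,   -1,    0, b 5]

/-- The set of tuples `b ∈ ℤ⁶` with `b₁, b₂, b₅, b₆ ≥ 2` such that `M(b)` is positive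
definite and `det M(b) = 1`. -/
def Tset : Set (Fin 6 → ℤ) :=
  {b | 2 ≤ b 0 ∧ 2 ≤ b 1 ∧ 2 ≤ b 4 ∧ 2 ≤ b 5 ∧
    ((Mb b).map ((↑·) : ℤ → ℝ)).PosDef ∧ (Mb b).det = 1}

/-- Orbit representatives. -/
def hReps : List (Fin 6 → ℤ) := [
  ![2, 3, 1, 7, 2, 3],
  ![2, 5, 1, 4, 2, 7],
  ![2, 7, 1, 3, 6, 31],
  ![2, 7, 1, 3, 7, 18],
  ![2, 9, 1, 3, 3, 11],
  ![2, 11, 1, 3, 2, 19],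
  ![2, 27, 1, 3, 2, 3],
  ![3, 4, 1, 3, 2, 11],
  ![3, 4, 1, 3, 3, 4],
  ![3, 5, 1, 3, 2, 3],
  ![3, 7, 1, 2, 12, 133],
  ![3, 7, 1, 2, 13, 72],
  ![3, 8, 1, 2, 7, 92],
  ![3, 8, 1, 2, 8, 35],
  ![3, 8, 1, 2, 11, 16],
  ![3, 11, 1, 2, 4, 77],
  ![3, 11, 1, 2, 5, 16],
  ![3, 16, 1, 2, 3, 88],
  ![3, 17, 1, 2, 3, 47],
  ![3, 47, 1, 2, 4, 5],
  ![3, 56, 1, 2, 3, 8],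
  ![3, 97, 1, 2, 3, 7],
  ![4, 5, 1, 2, 6, 67],
  ![4, 5, 1, 2, 7, 26],
  ![4, 7, 1, 2, 3, 52],
  ![4, 9, 1, 2, 3, 10],
  ![4, 13, 1, 2, 2, 71],
  ![4, 17, 1, 2, 2, 19],
  ![4, 23, 1, 2, 3, 4],
  ![4, 25, 1, 2, 2, 11],
  ![4, 77, 1, 2, 2, 7],
  ![5, 7, 1, 2, 3, 7],
  ![5, 8, 1, 2, 2, 55],
  ![5, 9, 1, 2, 2, 21],
  ![5, 16, 1, 2, 2, 7],
  ![5, 33, 1, 2, 2, 5],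
  ![8, 57, 1, 2, 2, 3],
  ![9, 32, 1, 2, 2, 3],
  ![12, 17, 1, 2, 2, 3]]

theorem hpml (a b : ℤ) (h : 0 < a * b) (ha : 0 < a) : 0 < b :=
  (mul_pos_iff_of_pos_left ha).1 h

def hS : Equiv.Perm (Fin 6) := Equiv.swap (0 : Fin 6) 1
def hU : Equiv.Perm (Fin 6) := Equiv.swap (4 : Fin 6) 5
def hV : Equiv.Perm (Fin 6) :=
  Equiv.swap (0 : Fin 6) 4 * Equiv.swap (1 : Fin 6) 5 * Equiv.swap (2 : Fin 6) 3

def hGrp : List (Equiv.Perm (Fin 6)) :=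
  [1, hS, hU, hS * hU, hV, hS * hV, hU * hV, hS * hU * hV]

def hCond (a b c d e f : ℤ) : Prop :=
  2 ≤ a ∧ 2 ≤ b ∧ 2 ≤ e ∧ 2 ≤ f ∧ 0 < a * b * c - a - b ∧ 0 < d * e * f - e - f ∧
    (a * b * c - a - b) * (d * e * f - e - f) = a * b * e * f + 1

instance (a b c d e f : ℤ) : Decidable (hCond a b c d e f) := by
  unfold hCond; infer_instance

/-- value of the second unknown when `b` is given -/
def hChkB (d a e b : ℤ) : Bool :=
  let P := a * b - a - b
  let X := P * (d * e - 1) - a * b * e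
  if 0 < X ∧ a < b ∧ (1 + P * e) % X = 0 ∧ e < (1 + P * e) / X then
    decide (![a, b, 1, d, e, (1 + P * e) / X] ∈ hReps) else true

def hChkF (d a e f : ℤ) : Bool :=
  let Q := d * e * f - e - f
  let X := (a - 1) * Q - a * e * f
  if 0 < X ∧ e < f ∧ (1 + a * Q) % X = 0 ∧ a < (1 + a * Q) / X then
    decide (![a, (1 + a * Q) / X, 1, d, e, f] ∈ hReps) else true

def hChk (d a e : ℤ) : Bool :=
  let K := (a - 1) * (d * e - 1) - a * e
  if 0 < K then
    (List.range (((a * (d * e - 1) + a * e) / K).toNat + 2)).all (fun i => hChkB d a e (i : ℤ)) &&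
    (List.range ((((a - 1) * e + a * e) / K).toNat + 2)).all (fun i => hChkF d a e (i : ℤ))
  else true

theorem hChk_all : (List.range 6).all (fun d => (List.range 12).all (fun a =>
    (List.range 21).all (fun e => hChk (d + 2 : ℕ) (a + 2 : ℕ) (e + 2 : ℕ)))) = true := by
  decide +kernel

theorem hChk_of (d a e : ℤ) (hd : 2 ≤ d) (hd' : d ≤ 7) (ha : 2 ≤ a) (ha' : a ≤ 13)
    (he : 2 ≤ e) (he' : e ≤ 22) : hChk d a e = true := by
  have h := hChk_all
  simp only [List.all_eq_true, List.mem_range] at h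
  have h1 := h (d - 2).toNat (by omega) (a - 2).toNat (by omega) (e - 2).toNat (by omega)
  have e1 : (((d - 2).toNat + 2 : ℕ) : ℤ) = d := by omega
  have e2 : (((a - 2).toNat + 2 : ℕ) : ℤ) = a := by omega
  have e3 : (((e - 2).toNat + 2 : ℕ) : ℤ) = e := by omega
  rwa [e1, e2, e3] at h1

theorem hFinal (a b d e f : ℤ) (hd : 2 ≤ d) (hd' : d ≤ 7) (ha : 2 ≤ a) (ha' : a ≤ 13)
    (he : 2 ≤ e) (he' : e ≤ 22) (hab : a < b) (hef : e < f)
    (hP : 0 < a * b - a - b) (hQ : 0 < d * e * f - e - f)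
    (h : (a * b - a - b) * (d * e * f - e - f) = a * b * e * f + 1) :
    ![a, b, 1, d, e, f] ∈ hReps := by
  have hc := hChk_of d a e hd hd' ha ha' he he'
  have hbf : 0 < b * f := mul_pos (by omega) (by omega)
  have hK : 0 < (a - 1) * (d * e - 1) - a * e := by
    have : ((a - 1) * (d * e - 1) - a * e) * (b * f)
        = (a - 1) * b * e + a * ((d * e - 1) * f - e) + 1 := by linarith
    have h2 : 0 < (d * e - 1) * f - e := by linarith
    have h3 : 0 < (a - 1) * b * e := by
      have : 0 < a - 1 := by omega
      exact mul_pos (mul_pos this (by omega)) (by omega)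
    have h4 : 0 < ((a - 1) * (d * e - 1) - a * e) * (b * f) := by
      rw [this]; positivity
    exact hpml _ _ (by rw [mul_comm]; exact h4) hbf
  unfold hChk at hc
  simp only [hK, if_true, Bool.and_eq_true, List.all_eq_true, List.mem_range] at hc
  obtain ⟨hcb, hcf⟩ := hc
  set K := (a - 1) * (d * e - 1) - a * e with hKdef
  have hprod : (K * b - a * (d * e - 1)) * (K * f - (a - 1) * e) = K + (a * e) ^ 2 := by
    have : K * (b * f) = (a - 1) * b * e + a * ((d * e - 1) * f - e) + 1 := by
      rw [hKdef]; linarith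
    have h5 : (K * b - a * (d * e - 1)) * (K * f - (a - 1) * e)
      = K * (K * (b * f)) - K * ((a - 1) * e * b) - K * (a * (d * e - 1) * f)
        + a * e * ((a - 1) * (d * e - 1)) := by ring
    have h6 : (a - 1) * (d * e - 1) = K + a * e := by rw [hKdef]; ring
    rw [h5, h6, this]; ring
  have hdisj : K * b - a * (d * e - 1) ≤ a * e + K ∨ K * f - (a - 1) * e ≤ a * e + K := by
    by_contra hcon
    push Not at hcon
    obtain ⟨h1, h2⟩ := hcon
    have hae : 0 < a * e := by positivity
    nlinarith [mul_lt_mul'' h1 h2 (by positivity) (by positivity)]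
  rcases hdisj with h1 | h1
  · have hb : b - 1 ≤ (a * (d * e - 1) + a * e) / K := by
      rw [Int.le_ediv_iff_mul_le hK]; linarith
    have h2 := hcb b.toNat (by omega)
    rw [Int.toNat_of_nonneg (by omega)] at h2
    unfold hChkB at h2
    have hX : f * ((a * b - a - b) * (d * e - 1) - a * b * e) = 1 + (a * b - a - b) * e := by
      linarith
    have hX0 : 0 < (a * b - a - b) * (d * e - 1) - a * b * e := by
      have : 0 < f * ((a * b - a - b) * (d * e - 1) - a * b * e) := by rw [hX]; positivity
      exact hpml _ _ this (by omega)
    simp only [← hX] at h2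
    rw [Int.mul_ediv_cancel _ hX0.ne'] at h2
    rw [if_pos ⟨hX0, hab, Int.mul_emod_left _ _, hef⟩] at h2
    exact of_decide_eq_true h2
  · have hb : f - 1 ≤ ((a - 1) * e + a * e) / K := by
      rw [Int.le_ediv_iff_mul_le hK]; linarith
    have h2 := hcf f.toNat (by omega)
    rw [Int.toNat_of_nonneg (by omega)] at h2
    unfold hChkF at h2
    have hX : b * ((a - 1) * (d * e * f - e - f) - a * e * f) = 1 + a * (d * e * f - e - f) := by
      linarith
    have hX0 : 0 < (a - 1) * (d * e * f - e - f) - a * e * f := by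
      have : 0 < b * ((a - 1) * (d * e * f - e - f) - a * e * f) := by rw [hX]; positivity
      exact hpml _ _ this (by omega)
    simp only [← hX] at h2
    rw [Int.mul_ediv_cancel _ hX0.ne'] at h2
    rw [if_pos ⟨hX0, hef, Int.mul_emod_left _ _, hab⟩] at h2
    exact of_decide_eq_true h2

theorem hSix (a b : ℤ) (ha : 2 ≤ a) (hab : a < b) : 6 * (a + b) ≤ 5 * (a * b) := by
  nlinarith [mul_nonneg (sub_nonneg.2 ha) (show (0 : ℤ) ≤ b - 3 by omega)]

theorem hCore (a b c d e f : ℤ) (h : hCond a b c d e f) (hab : a < b) (hef : e < f)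
    (hcd : c ≤ d) : ![a, b, c, d, e, f] ∈ hReps := by
  obtain ⟨ha, hb, he, hf, hP, hQ, h⟩ := h
  have sab := hSix a b ha hab
  have sef := hSix e f he hef
  have hAB : 6 ≤ a * b := by nlinarith
  have hEF : 6 ≤ e * f := by nlinarith
  have hABEF : 36 ≤ (a * b) * (e * f) := by nlinarith
  have h' : (a * b * c - a - b) * (d * e * f - e - f) = (a * b) * (e * f) + 1 := by
    rw [h]; ring
  have hc1 : 1 ≤ c := by
    by_contra hcon
    have : a * b * c ≤ 0 := mul_nonpos_of_nonneg_of_nonpos (by positivity) (by omega)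
    omega
  have hc : c = 1 := by
    by_contra hcon
    have hc2 : 2 ≤ c := by omega
    have h1 : 7 * (a * b) ≤ 6 * (a * b * c - a - b) := by nlinarith
    have h2 : 7 * (e * f) ≤ 6 * (d * e * f - e - f) := by nlinarith
    have h3 := mul_le_mul h1 h2 (by positivity) (by linarith)
    nlinarith
  subst hc
  simp only [mul_one] at *
  have hd2 : 2 ≤ d := by
    by_contra hcon
    have hd : d = 1 := by omega
    subst hd
    have h1 : a * b - a - b ≤ a * b := by linarith
    have h2 : 1 * e * f - e - f ≤ e * f := by linarith
    have h3 := mul_le_mul h1 h2 hQ.le (by positivity)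
    linarith
  set P := a * b - a - b with hPd
  set Q := d * e * f - e - f with hQd
  have hP6 : a * b ≤ 6 * P := by linarith
  have hQ6 : (6 * d - 5) * (e * f) ≤ 6 * Q := by rw [hQd]; linarith
  have hd7 : d ≤ 7 := by
    by_contra hcon
    have h43 : 43 * (e * f) ≤ 6 * Q := by nlinarith
    have h3 := mul_le_mul hP6 h43 (by positivity) (by linarith)
    nlinarith
  have ha13 : a ≤ 13 := by
    by_contra hcon
    have h7 : 7 * (e * f) ≤ 6 * Q := by nlinarith
    have h3 : P * (7 * (e * f)) ≤ P * (6 * Q) := mul_le_mul_of_nonneg_left h7 hP.le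
    have h4 : (e * f) * (7 * P - 6 * (a * b)) ≤ 6 := by linarith
    have h5 : 7 * P - 6 * (a * b) ≤ 1 := by
      by_contra hh
      nlinarith
    nlinarith [mul_nonneg (show (0 : ℤ) ≤ a - 14 by omega) (show (0 : ℤ) ≤ b - 15 by omega)]
  have hdP : (e * f) * (d * P - a * b) = P * (e + f) + 1 := by
    have : P * Q = d * P * (e * f) - P * (e + f) := by rw [hQd]; ring
    linarith
  have hdP0 : 0 < d * P - a * b := by
    have : 0 < (e * f) * (d * P - a * b) := by rw [hdP]; positivity
    exact hpml _ _ this (by omega)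
  have h11 : P ≤ 11 * (d * P - a * b) := by
    rw [hPd] at hdP0 ⊢
    clear_value P Q
    clear hPd hQd hP6 hQ6 hdP h h' hQ hP sab sef hAB hEF hABEF
    interval_cases d <;> interval_cases a <;> omega
  have he22 : e ≤ 22 := by
    by_contra hcon
    have h1 : (e * f) * P ≤ (e * f) * (11 * (d * P - a * b)) :=
      mul_le_mul_of_nonneg_left h11 (by positivity)
    have h2 : P * (e * f) ≤ P * (11 * (e + f) + 11) := by linarith
    have h3 := le_of_mul_le_mul_left h2 hP
    nlinarith [mul_nonneg (show (0 : ℤ) ≤ e - 23 by omega) (show (0 : ℤ) ≤ f - 24 by omega)]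
  exact hFinal a b d e f hd2 hd7 ha ha13 he he22 hab hef hP hQ h

def hC (x : Fin 6 → ℤ) : Prop := hCond (x 0) (x 1) (x 2) (x 3) (x 4) (x 5)

instance (x : Fin 6 → ℤ) : Decidable (hC x) := by unfold hC; infer_instance

def hGood (x : Fin 6 → ℤ) : Prop := ∃ r ∈ hReps, ∃ g ∈ hGrp, x = r ∘ g

theorem hSS : hS * hS = 1 := Equiv.swap_mul_self _ _
theorem hUU : hU * hU = 1 := Equiv.swap_mul_self _ _
theorem hVV : hV * hV = 1 := by decide +kernel
theorem hUS : hU * hS = hS * hU := by decide +kernel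
theorem hVS : hV * hS = hU * hV := by decide +kernel
theorem hVU : hV * hU = hS * hV := by decide +kernel

theorem hGrp_one : (1 : Equiv.Perm (Fin 6)) ∈ hGrp := by simp [hGrp]
theorem hGrp_S : hS ∈ hGrp := by simp [hGrp]
theorem hGrp_U : hU ∈ hGrp := by simp [hGrp]
theorem hGrp_V : hV ∈ hGrp := by simp [hGrp]

theorem hGrp_mulS (g : Equiv.Perm (Fin 6)) (hg : g ∈ hGrp) : hS * g ∈ hGrp := by
  simp only [hGrp, List.mem_cons, List.not_mem_nil, or_false] at hg
  rcases hg with rfl | rfl | rfl | rfl | rfl | rfl | rfl | rfl <;>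
    (try simp only [mul_one, ← mul_assoc, hSS, one_mul]) <;> simp [hGrp]

theorem hGrp_mulU (g : Equiv.Perm (Fin 6)) (hg : g ∈ hGrp) : hU * g ∈ hGrp := by
  simp only [hGrp, List.mem_cons, List.not_mem_nil, or_false] at hg
  have h1 : hS * hU * hU = hS := by rw [mul_assoc, hUU, mul_one]
  rcases hg with rfl | rfl | rfl | rfl | rfl | rfl | rfl | rfl <;>
    (try simp only [mul_one, ← mul_assoc, hUS, h1, hUU, one_mul]) <;> simp [hGrp]

theorem hGrp_mulV (g : Equiv.Perm (Fin 6)) (hg : g ∈ hGrp) : hV * g ∈ hGrp := by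
  simp only [hGrp, List.mem_cons, List.not_mem_nil, or_false] at hg
  have h1 : hU * hV * hU = hS * hU * hV := by rw [mul_assoc, hVU, ← mul_assoc, hUS]
  have h2 : hS * hU * hV * hV = hS * hU := by rw [mul_assoc, hVV, mul_one]
  have h3 : hU * hV * hV = hU := by rw [mul_assoc, hVV, mul_one]
  have h4 : hS * hV * hV = hS := by rw [mul_assoc, hVV, mul_one]
  rcases hg with rfl | rfl | rfl | rfl | rfl | rfl | rfl | rfl <;>
    simp only [mul_one, ← mul_assoc, hVS, hVU, h1, h2, h3, h4, hVV] <;> simp [hGrp]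

theorem hGrp_mul (g : Equiv.Perm (Fin 6)) (hg : g ∈ hGrp) (k : Equiv.Perm (Fin 6))
    (hk : k ∈ hGrp) : g * k ∈ hGrp := by
  simp only [hGrp, List.mem_cons, List.not_mem_nil, or_false] at hg
  rcases hg with rfl | rfl | rfl | rfl | rfl | rfl | rfl | rfl
  · simpa using hk
  · exact hGrp_mulS _ hk
  · exact hGrp_mulU _ hk
  · exact hGrp_mulS _ (hGrp_mulU _ hk)
  · exact hGrp_mulV _ hk
  · exact hGrp_mulS _ (hGrp_mulV _ hk)
  · exact hGrp_mulU _ (hGrp_mulV _ hk)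
  · exact hGrp_mulS _ (hGrp_mulU _ (hGrp_mulV _ hk))

theorem hGrp_inv (g : Equiv.Perm (Fin 6)) (hg : g ∈ hGrp) : g⁻¹ ∈ hGrp := by
  have hp : ∀ n : ℕ, g ^ n ∈ hGrp := by
    intro n
    induction n with
    | zero => simpa using hGrp_one
    | succ n ih => rw [pow_succ]; exact hGrp_mul _ ih _ hg
  have h : g⁻¹ = g ^ (orderOf g - 1) := by
    rw [inv_eq_iff_mul_eq_one, ← pow_succ', Nat.sub_add_cancel (orderOf_pos g), pow_orderOf_eq_one]
  rw [h]
  exact hp _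

theorem hGood_comp (x : Fin 6 → ℤ) (k : Equiv.Perm (Fin 6)) (hk : k ∈ hGrp)
    (hx : hGood x) : hGood (x ∘ k) := by
  obtain ⟨r, hr, g, hg, rfl⟩ := hx
  exact ⟨r, hr, g * k, hGrp_mul g hg k hk, by rw [Equiv.Perm.coe_mul]; rfl⟩

theorem hGood_of_comp (x : Fin 6 → ℤ) (k : Equiv.Perm (Fin 6)) (hk : k ∈ hGrp)
    (hx : hGood (x ∘ k)) : hGood x := by
  have h := hGood_comp _ k⁻¹ (hGrp_inv k hk) hx
  have e : (x ∘ k) ∘ (k⁻¹ : Equiv.Perm (Fin 6)) = x := by funext i; simp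
  rwa [e] at h

theorem hC_S (x : Fin 6 → ℤ) (h : hC x) : hC (x ∘ hS) := by
  have e0 : hS 0 = 1 := by decide
  have e1 : hS 1 = 0 := by decide
  have e2 : hS 2 = 2 := by decide
  have e3 : hS 3 = 3 := by decide
  have e4 : hS 4 = 4 := by decide
  have e5 : hS 5 = 5 := by decide
  simp only [hC, hCond, Function.comp_apply, e0, e1, e2, e3, e4, e5] at *
  obtain ⟨h1, h2, h3, h4, h5, h6, h7⟩ := h
  exact ⟨h2, h1, h3, h4, by linarith, h6, by linarith⟩

theorem hC_U (x : Fin 6 → ℤ) (h : hC x) : hC (x ∘ hU) := by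
  have e0 : hU 0 = 0 := by decide
  have e1 : hU 1 = 1 := by decide
  have e2 : hU 2 = 2 := by decide
  have e3 : hU 3 = 3 := by decide
  have e4 : hU 4 = 5 := by decide
  have e5 : hU 5 = 4 := by decide
  simp only [hC, hCond, Function.comp_apply, e0, e1, e2, e3, e4, e5] at *
  obtain ⟨h1, h2, h3, h4, h5, h6, h7⟩ := h
  exact ⟨h1, h2, h4, h3, h5, by linarith, by linarith⟩

theorem hC_V (x : Fin 6 → ℤ) (h : hC x) : hC (x ∘ hV) := by
  have e0 : hV 0 = 4 := by decide
  have e1 : hV 1 = 5 := by decide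
  have e2 : hV 2 = 3 := by decide
  have e3 : hV 3 = 2 := by decide
  have e4 : hV 4 = 0 := by decide
  have e5 : hV 5 = 1 := by decide
  simp only [hC, hCond, Function.comp_apply, e0, e1, e2, e3, e4, e5] at *
  obtain ⟨h1, h2, h3, h4, h5, h6, h7⟩ := h
  exact ⟨h3, h4, h1, h2, by linarith, by linarith, by linarith⟩

theorem hGood1 (x : Fin 6 → ℤ) (h : hC x) (h1 : x 0 < x 1) (h2 : x 4 < x 5) (h3 : x 2 ≤ x 3) :
    hGood x := by
  refine ⟨x, ?_, 1, hGrp_one, by simp⟩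
  have := hCore _ _ _ _ _ _ h h1 h2 h3
  convert this using 1
  funext i
  fin_cases i <;> rfl

theorem hGood2 (x : Fin 6 → ℤ) (h : hC x) (h1 : x 0 < x 1) (h2 : x 4 < x 5) : hGood x := by
  rcases le_total (x 2) (x 3) with h3 | h3
  · exact hGood1 x h h1 h2 h3
  · exact hGood_of_comp x hV hGrp_V (hGood1 _ (hC_V x h) h2 h1 h3)

theorem hne (a b c d e f : ℤ) (h : hCond a b c d e f) : a ≠ b := by
  rintro rfl
  obtain ⟨h1, h2, h3, h4, h5, h6, h7⟩ := h
  have : a ∣ 1 := ⟨(a * c - 2) * (d * e * f - e - f) - a * e * f, by linarith⟩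
  have := Int.le_of_dvd one_pos this
  omega

theorem hGood3 (x : Fin 6 → ℤ) (h : hC x) (h1 : x 0 < x 1) : hGood x := by
  rcases lt_trichotomy (x 4) (x 5) with h3 | h3 | h3
  · exact hGood2 x h h1 h3
  · exact absurd h3 (hne _ _ _ _ _ _ (hC_V x h))
  · exact hGood_of_comp x hU hGrp_U (hGood2 _ (hC_U x h) h1 h3)

theorem hGood4 (x : Fin 6 → ℤ) (h : hC x) : hGood x := by
  rcases lt_trichotomy (x 0) (x 1) with h3 | h3 | h3
  · exact hGood3 x h h3
  · exact absurd h3 (hne _ _ _ _ _ _ h)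
  · exact hGood_of_comp x hS hGrp_S (hGood3 _ (hC_S x h) h3)

theorem hC_grp (x : Fin 6 → ℤ) (h : hC x) (g : Equiv.Perm (Fin 6)) (hg : g ∈ hGrp) :
    hC (x ∘ g) := by
  simp only [hGrp, List.mem_cons, List.not_mem_nil, or_false] at hg
  rcases hg with rfl | rfl | rfl | rfl | rfl | rfl | rfl | rfl
  · exact h
  · exact hC_S _ h
  · exact hC_U _ h
  · exact hC_U _ (hC_S _ h)
  · exact hC_V _ h
  · exact hC_V _ (hC_S _ h)
  · exact hC_V _ (hC_U _ h)
  · exact hC_V _ (hC_U _ (hC_S _ h))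

def hNorm (x : Fin 6 → ℤ) : Prop := hC x ∧ x 0 < x 1 ∧ x 4 < x 5 ∧ x 2 < x 3

instance (x : Fin 6 → ℤ) : Decidable (hNorm x) := by unfold hNorm; infer_instance

theorem hReps_norm : ∀ r ∈ hReps, hNorm r := by decide +kernel

theorem hReps_C : ∀ r ∈ hReps, ∀ g ∈ hGrp, hC (r ∘ g) := fun r hr g hg =>
  hC_grp r (hReps_norm r hr).1 g hg

theorem hNorm_one (x : Fin 6 → ℤ) (g : Equiv.Perm (Fin 6)) (hg : g ∈ hGrp) (h : hNorm x)
    (h' : hNorm (x ∘ g)) : g = 1 := by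
  obtain ⟨-, h1, h2, h3⟩ := h
  obtain ⟨-, h4, h5, h6⟩ := h'
  simp only [hGrp, List.mem_cons, List.not_mem_nil, or_false] at hg
  rcases hg with rfl | rfl | rfl | rfl | rfl | rfl | rfl | rfl
  · rfl
  · exact absurd (show x 1 < x 0 from h4) h1.not_gt
  · exact absurd (show x 5 < x 4 from h5) h2.not_gt
  · exact absurd (show x 1 < x 0 from h4) h1.not_gt
  · exact absurd (show x 3 < x 2 from h6) h3.not_gt
  · exact absurd (show x 3 < x 2 from h6) h3.not_gt
  · exact absurd (show x 3 < x 2 from h6) h3.not_gt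
  · exact absurd (show x 3 < x 2 from h6) h3.not_gt

theorem hDet (x : Fin 6 → ℤ) : (Mb x).det =
    (x 0 * x 1 * x 2 - x 0 - x 1) * (x 3 * x 4 * x 5 - x 4 - x 5)
      - x 0 * x 1 * x 4 * x 5 := by
  simp [Mb, Matrix.det_succ_row_zero, Fin.sum_univ_succ, Fin.succAbove]
  ring

theorem hQuad (x : Fin 6 → ℤ) (v : Fin 6 → ℝ) :
    star v ⬝ᵥ (((Mb x).map ((↑·) : ℤ → ℝ)).mulVec v) =
    x 0 * v 0 ^ 2 + x 1 * v 1 ^ 2 + x 2 * v 2 ^ 2 + x 3 * v 3 ^ 2 + x 4 * v 4 ^ 2 + x 5 * v 5 ^ 2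
      - 2 * v 0 * v 2 - 2 * v 1 * v 2 - 2 * v 2 * v 3 - 2 * v 3 * v 4 - 2 * v 3 * v 5 := by
  simp [Mb, Matrix.mulVec, dotProduct, Fin.sum_univ_succ]
  ring

theorem hSymm (x : Fin 6 → ℤ) : ((Mb x).map ((↑·) : ℤ → ℝ)).IsHermitian := by
  ext i j
  fin_cases i <;> fin_cases j <;> simp [Mb]

theorem hPos (a b c d e f : ℝ) (ha : 0 < a) (hb : 0 < b) (he : 0 < e) (hf : 0 < f)
    (hP : 0 < a * b * c - a - b)
    (h : (a * b * c - a - b) * (d * e * f - e - f) = a * b * e * f + 1)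
    (p q r s t u : ℝ)
    (hle : a * p ^ 2 + b * q ^ 2 + c * r ^ 2 + d * s ^ 2 + e * t ^ 2 + f * u ^ 2
      - 2 * p * r - 2 * q * r - 2 * r * s - 2 * s * t - 2 * s * u ≤ 0) :
    p = 0 ∧ q = 0 ∧ r = 0 ∧ s = 0 ∧ t = 0 ∧ u = 0 := by
  set P := a * b * c - a - b with hPd
  have key : a * p ^ 2 + b * q ^ 2 + c * r ^ 2 + d * s ^ 2 + e * t ^ 2 + f * u ^ 2
      - 2 * p * r - 2 * q * r - 2 * r * s - 2 * s * t - 2 * s * u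
      = a * (p - r / a) ^ 2 + b * (q - r / b) ^ 2 + e * (t - s / e) ^ 2 + f * (u - s / f) ^ 2
        + P / (a * b) * (r - a * b / P * s) ^ 2 + 1 / (P * e * f) * s ^ 2 := by
    have hd : d = ((a * b * e * f + 1) / P + e + f) / (e * f) := by
      field_simp; linarith
    have hc : c = (P + a + b) / (a * b) := by
      field_simp; linarith
    rw [hd, hc]
    clear_value P
    field_simp
    ring
  rw [key] at hle
  have n1 : 0 ≤ a * (p - r / a) ^ 2 := by positivity
  have n2 : 0 ≤ b * (q - r / b) ^ 2 := by positivity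
  have n3 : 0 ≤ e * (t - s / e) ^ 2 := by positivity
  have n4 : 0 ≤ f * (u - s / f) ^ 2 := by positivity
  have n5 : 0 ≤ P / (a * b) * (r - a * b / P * s) ^ 2 := by positivity
  have n6 : 0 ≤ 1 / (P * e * f) * s ^ 2 := by positivity
  have z6 : 1 / (P * e * f) * s ^ 2 = 0 := by linarith
  have z5 : P / (a * b) * (r - a * b / P * s) ^ 2 = 0 := by linarith
  have z4 : f * (u - s / f) ^ 2 = 0 := by linarith
  have z3 : e * (t - s / e) ^ 2 = 0 := by linarith
  have z2 : b * (q - r / b) ^ 2 = 0 := by linarith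
  have z1 : a * (p - r / a) ^ 2 = 0 := by linarith
  have m6 : 1 / (P * e * f) ≠ 0 := by positivity
  have m5 : P / (a * b) ≠ 0 := by positivity
  have s0 : s = 0 := pow_eq_zero_iff two_ne_zero |>.1 ((mul_eq_zero.1 z6).resolve_left m6)
  have r0 := pow_eq_zero_iff two_ne_zero |>.1 ((mul_eq_zero.1 z5).resolve_left m5)
  have u0 := pow_eq_zero_iff two_ne_zero |>.1 ((mul_eq_zero.1 z4).resolve_left hf.ne')
  have t0 := pow_eq_zero_iff two_ne_zero |>.1 ((mul_eq_zero.1 z3).resolve_left he.ne')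
  have q0 := pow_eq_zero_iff two_ne_zero |>.1 ((mul_eq_zero.1 z2).resolve_left hb.ne')
  have p0 := pow_eq_zero_iff two_ne_zero |>.1 ((mul_eq_zero.1 z1).resolve_left ha.ne')
  subst s0
  simp at r0 u0 t0
  subst r0
  simp at q0 p0
  exact ⟨p0, q0, rfl, rfl, t0, u0⟩

theorem hT_iff (x : Fin 6 → ℤ) : x ∈ Tset ↔ hC x := by
  constructor
  · rintro ⟨h1, h2, h3, h4, hpd, hdet⟩
    rw [hDet] at hdet
    refine ⟨h1, h2, h3, h4, ?_, ?_, by linarith⟩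
    · have h := hpd.dotProduct_mulVec_pos
        (x := ![(x 1 : ℝ), (x 0 : ℝ), (x 0 : ℝ) * x 1, 0, 0, 0]) (by
          intro h0
          have := congrFun h0 0
          simp at this
          omega)
      rw [hQuad] at h
      simp at h
      have h' : (0 : ℝ) < ((x 0 * x 1 * (x 0 * x 1 * x 2 - x 0 - x 1) : ℤ) : ℝ) := by
        push_cast; linarith
      have h'' := Int.cast_pos.1 h'
      exact hpml _ _ h'' (by positivity)
    · have h := hpd.dotProduct_mulVec_pos
        (x := ![0, 0, 0, (x 4 : ℝ) * x 5, (x 5 : ℝ), (x 4 : ℝ)]) (by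
          intro h0
          have := congrFun h0 4
          simp at this
          omega)
      rw [hQuad] at h
      simp at h
      have h' : (0 : ℝ) < ((x 4 * x 5 * (x 3 * x 4 * x 5 - x 4 - x 5) : ℤ) : ℝ) := by
        push_cast; linarith
      have h'' := Int.cast_pos.1 h'
      exact hpml _ _ h'' (by positivity)
  · rintro ⟨h1, h2, h3, h4, h5, h6, h7⟩
    refine ⟨h1, h2, h3, h4, ?_, by rw [hDet]; linarith⟩
    refine Matrix.PosDef.of_dotProduct_mulVec_pos (hSymm x) ?_
    intro v hv
    rw [hQuad]
    by_contra hcon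
    apply hv
    have := hPos (x 0) (x 1) (x 2) (x 3) (x 4) (x 5)
      (by exact_mod_cast (by omega : 0 < x 0)) (by exact_mod_cast (by omega : 0 < x 1))
      (by exact_mod_cast (by omega : 0 < x 4)) (by exact_mod_cast (by omega : 0 < x 5))
      (by exact_mod_cast h5) (by exact_mod_cast h7) _ _ _ _ _ _ (not_lt.1 hcon)
    obtain ⟨g0, g1, g2, g3, g4, g5⟩ := this
    funext i
    fin_cases i <;> assumption

theorem hT_good (x : Fin 6 → ℤ) : x ∈ Tset ↔ hGood x := by
  rw [hT_iff]
  refine ⟨hGood4 x, ?_⟩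
  rintro ⟨r, hr, g, hg, rfl⟩
  exact hReps_C r hr g hg

theorem hGrp_nodup : hGrp.Nodup := by
  apply List.Nodup.of_map (fun g => (g 0).val * 6 + (g 4).val)
  decide +kernel
theorem hReps_nodup : hReps.Nodup := by
  apply List.Nodup.of_map (fun x => (x 1 * 1000 + x 5).toNat)
  decide +kernel

theorem hReps_inj (r : Fin 6 → ℤ) (hr : r ∈ hReps) (r' : Fin 6 → ℤ) (hr' : r' ∈ hReps)
    (g : Equiv.Perm (Fin 6)) (hg : g ∈ hGrp) (h : r = r' ∘ g) : r = r' := by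
  have := hNorm_one r' g hg (hReps_norm r' hr') (h ▸ hReps_norm r hr)
  subst this
  simpa using h

def hAll : Finset (Fin 6 → ℤ) :=
  (hReps.toFinset ×ˢ hGrp.toFinset).image
    (fun p : (Fin 6 → ℤ) × Equiv.Perm (Fin 6) => p.1 ∘ p.2)

theorem hAll_card : hAll.card = 312 := by
  unfold hAll
  rw [Finset.card_image_of_injOn, Finset.card_product,
    List.toFinset_card_of_nodup hReps_nodup, List.toFinset_card_of_nodup hGrp_nodup]
  · rfl
  · rintro ⟨r, g⟩ h1 ⟨r', g'⟩ h2 h3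
    simp only [Finset.coe_product, Set.mem_prod, List.coe_toFinset, Set.mem_ofPred_eq] at h1 h2
    have h4 : r ∘ g = r' ∘ g' := h3
    have h5 : r = r' ∘ (g' * g⁻¹ : Equiv.Perm (Fin 6)) := by
      funext i
      have := congrFun h4 (g⁻¹ i)
      simpa using this
    have hk := hGrp_mul g' h2.2 g⁻¹ (hGrp_inv g h1.2)
    have h6 := hNorm_one r' _ hk (hReps_norm r' h2.1) (h5 ▸ hReps_norm r h1.1)
    have h7 := hReps_inj r h1.1 r' h2.1 _ hk h5
    rw [h7, mul_inv_eq_one.1 h6]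

theorem hGrp_closure (g : Equiv.Perm (Fin 6)) : g ∈ Subgroup.closure
    {Equiv.swap (0 : Fin 6) 1, Equiv.swap (4 : Fin 6) 5,
      Equiv.swap (0 : Fin 6) 4 * Equiv.swap (1 : Fin 6) 5 * Equiv.swap (2 : Fin 6) 3}
    ↔ g ∈ hGrp := by
  constructor
  · intro h
    induction h using Subgroup.closure_induction with
    | mem x hx =>
      rcases hx with rfl | rfl | rfl
      · exact hGrp_S
      · exact hGrp_U
      · exact hGrp_V
    | one => exact hGrp_one
    | mul x y _ _ hx hy => exact hGrp_mul x hx y hy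
    | inv x _ hx => exact hGrp_inv x hx
  · intro h
    have s : hS ∈ Subgroup.closure
      {Equiv.swap (0 : Fin 6) 1, Equiv.swap (4 : Fin 6) 5,
      Equiv.swap (0 : Fin 6) 4 * Equiv.swap (1 : Fin 6) 5 * Equiv.swap (2 : Fin 6) 3} :=
      Subgroup.subset_closure (Or.inl rfl)
    have u : hU ∈ Subgroup.closure
      {Equiv.swap (0 : Fin 6) 1, Equiv.swap (4 : Fin 6) 5,
      Equiv.swap (0 : Fin 6) 4 * Equiv.swap (1 : Fin 6) 5 * Equiv.swap (2 : Fin 6) 3} :=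
      Subgroup.subset_closure (Or.inr (Or.inl rfl))
    have v : hV ∈ Subgroup.closure
      {Equiv.swap (0 : Fin 6) 1, Equiv.swap (4 : Fin 6) 5,
      Equiv.swap (0 : Fin 6) 4 * Equiv.swap (1 : Fin 6) 5 * Equiv.swap (2 : Fin 6) 3} :=
      Subgroup.subset_closure (Or.inr (Or.inr rfl))
    simp only [hGrp, List.mem_cons, List.not_mem_nil, or_false] at h
    rcases h with rfl | rfl | rfl | rfl | rfl | rfl | rfl | rfl
    · exact one_mem _
    · exact s
    · exact u
    · exact mul_mem s u
    · exact v
    · exact mul_mem s v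
    · exact mul_mem u v
    · exact mul_mem (mul_mem s u) v

theorem hgraph_classification :
    Set.ncard Tset = 312 ∧
    (∀ G : Subgroup (Equiv.Perm (Fin 6)),
      G = Subgroup.closure
        {Equiv.swap (0 : Fin 6) 1, Equiv.swap (4 : Fin 6) 5,
          Equiv.swap (0 : Fin 6) 4 * Equiv.swap (1 : Fin 6) 5 * Equiv.swap (2 : Fin 6) 3} →
      Nat.card G = 8 ∧
      (∀ b ∈ Tset, ∀ π ∈ G, (b ∘ π) ∈ Tset) ∧
      Set.ncard {s : Set (Fin 6 → ℤ) |
        ∃ b ∈ Tset, s = {b' | ∃ π ∈ G, b' = b ∘ π}} = 39) := by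
  refine ⟨?_, ?_⟩
  · have : Tset = (hAll : Set (Fin 6 → ℤ)) := by
      ext x
      rw [hT_good]
      constructor
      · rintro ⟨r, hr, g, hg, rfl⟩
        simp only [hAll, Finset.coe_image]
        exact ⟨(r, g), by simp [hr, hg], rfl⟩
      · intro h
        simp only [hAll, Finset.coe_image] at h
        obtain ⟨⟨r, g⟩, h1, rfl⟩ := h
        simp at h1
        exact ⟨r, h1.1, g, h1.2, rfl⟩
    rw [this, Set.ncard_coe_finset, hAll_card]
  · intro G hG
    have hmem : ∀ g, g ∈ G ↔ g ∈ hGrp := by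
      intro g; rw [hG]; exact hGrp_closure g
    refine ⟨?_, ?_, ?_⟩
    · have : (G : Set (Equiv.Perm (Fin 6))) = (hGrp.toFinset : Set (Equiv.Perm (Fin 6))) := by
        ext g; simp [hmem]
      have h2 : Nat.card G = Set.ncard (G : Set (Equiv.Perm (Fin 6))) := rfl
      rw [h2, this, Set.ncard_coe_finset, List.toFinset_card_of_nodup hGrp_nodup]
      rfl
    · intro b hb π hπ
      rw [hT_good] at hb ⊢
      exact hGood_comp b π ((hmem π).1 hπ) hb
    · have : {s : Set (Fin 6 → ℤ) | ∃ b ∈ Tset, s = {b' | ∃ π ∈ G, b' = b ∘ π}}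
          = (fun b : Fin 6 → ℤ => {b' | ∃ π ∈ G, b' = b ∘ π}) ''
            (hReps.toFinset : Set (Fin 6 → ℤ)) := by
        ext s
        constructor
        · rintro ⟨b, hb, rfl⟩
          rw [hT_good] at hb
          obtain ⟨r, hr, g, hg, rfl⟩ := hb
          have hgG := (hmem g).2 hg
          refine ⟨r, by simpa using hr, ?_⟩
          ext y
          constructor
          · rintro ⟨k, hk, rfl⟩
            refine ⟨g⁻¹ * k, mul_mem (inv_mem hgG) hk, ?_⟩
            funext i; simp
          · rintro ⟨k, hk, rfl⟩
            exact ⟨g * k, mul_mem hgG hk, by funext i; simp⟩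
        · rintro ⟨r, hr, rfl⟩
          refine ⟨r, ?_, rfl⟩
          rw [hT_good]
          exact ⟨r, by simpa using hr, 1, hGrp_one, by simp⟩
      rw [this, Set.InjOn.ncard_image, Set.ncard_coe_finset,
        List.toFinset_card_of_nodup hReps_nodup]
      · rfl
      · intro r hr r' hr' heq
        have h1 : r ∈ {b' | ∃ π ∈ G, b' = r ∘ π} := ⟨1, one_mem _, by simp⟩
        have h2 : r ∈ {b' | ∃ π ∈ G, b' = r' ∘ π} := by
          have h3 : {b' | ∃ π ∈ G, b' = r ∘ π} = {b' | ∃ π ∈ G, b' = r' ∘ π} := heq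
          rw [← h3]; exact h1
        obtain ⟨g, hg, hgr⟩ := h2
        exact hReps_inj r (by simpa using hr) r' (by simpa using hr') g ((hmem g).1 hg) hgr
end

section
/- Let h, k ∈ ℤ with k ≥ 1 and gcd(h,k) = 1, let L, R₁, R₂, μ₁, a₁, a₂, ℓ₂ ∈ ℤ, and let p be an odd prime with p | k, p | R₁, p ∤ μ₁ and p ∤ a₁. Then Σ_{ℓ₁=0}^{k−1} e^{(2πi h/k)(L R₁ μ₁ ℓ₁² + (2μ₁a₁ + L²R₁R₂ℓ₂ + LR₁a₂)ℓ₁)} = 0. -/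
open Complex

theorem shift_sum_zero (f : ℕ → ℂ) (c : ℂ) (hc : c ≠ 1) (k m : ℕ)
    (hk : ∀ n, f (k + n) = f n) (hm : ∀ n, f (m + n) = c * f n) :
    ∑ n ∈ Finset.range k, f n = 0 := by
  have h1 := Finset.sum_range_add f m k
  have h2 := Finset.sum_range_add f k m
  rw [add_comm k m, h1] at h2
  simp only [hk, hm] at h2
  rw [← Finset.mul_sum] at h2
  have h3 : (c - 1) * ∑ n ∈ Finset.range k, f n = 0 := by linear_combination h2
  exact (mul_eq_zero.mp h3).resolve_left (sub_ne_zero.mpr hc)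

theorem exp_shift_mul (h k x y z w : ℤ) (hk : k ≠ 0) (hx : x = y + z + k * w) :
    Complex.exp (2 * Real.pi * Complex.I * (h : ℂ) / (k : ℂ) * (x : ℂ)) =
    Complex.exp (2 * Real.pi * Complex.I * (h : ℂ) / (k : ℂ) * (y : ℂ)) *
    Complex.exp (2 * Real.pi * Complex.I * (h : ℂ) / (k : ℂ) * (z : ℂ)) := by
  have hk' : (k : ℂ) ≠ 0 := by exact_mod_cast hk
  rw [← Complex.exp_add, Complex.exp_eq_exp_iff_exists_int]
  refine ⟨h * w, ?_⟩
  subst hx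
  push_cast
  field_simp

theorem gauss_sum_vanishes (h k : ℤ) (hk : 1 ≤ k) (hhk : IsCoprime h k)
    (L R₁ R₂ μ₁ a₁ a₂ ℓ₂ : ℤ) (p : ℕ) (hp : p.Prime) (hodd : Odd p)
    (hpk : (p : ℤ) ∣ k) (hpR : (p : ℤ) ∣ R₁) (hpμ : ¬ (p : ℤ) ∣ μ₁)
    (hpa : ¬ (p : ℤ) ∣ a₁) :
    ∑ ℓ₁ ∈ Finset.range k.toNat,
      Complex.exp (2 * Real.pi * Complex.I * (h : ℂ) / (k : ℂ) *
        ((L * R₁ * μ₁ * ℓ₁ ^ 2 +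
          (2 * μ₁ * a₁ + L ^ 2 * R₁ * R₂ * ℓ₂ + L * R₁ * a₂) * ℓ₁ : ℤ) : ℂ)) = 0 := by
  have hk0 : k ≠ 0 := by omega
  have hpp : Prime (p : ℤ) := Nat.prime_iff_prime_int.mp hp
  obtain ⟨m, rfl⟩ := hpk
  obtain ⟨r, rfl⟩ := hpR
  have hp0 : (0 : ℤ) < p := by exact_mod_cast hp.pos
  have hm0 : 0 ≤ m := by
    by_contra hm
    nlinarith
  lift m to ℕ using hm0
  have hkn : ((p : ℤ) * m).toNat = p * m := by
    rw [← Nat.cast_mul, Int.toNat_natCast]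
  rw [hkn]
  set B : ℤ := 2 * μ₁ * a₁ + L ^ 2 * (p * r) * R₂ * ℓ₂ + L * (p * r) * a₂ with hB
  have hpB : ¬ (p : ℤ) ∣ h * B := by
    intro hd
    rcases hpp.dvd_or_dvd hd with hd | hd
    · exact hpp.not_isUnit (hhk.isUnit_of_dvd' hd (dvd_mul_right _ _))
    · have h2 : (p : ℤ) ∣ 2 * μ₁ * a₁ := by
        have : (2 * μ₁ * a₁ : ℤ) = B - p * (L ^ 2 * r * R₂ * ℓ₂ + L * r * a₂) := by
          rw [hB]; ring
        rw [this]
        exact dvd_sub hd (dvd_mul_right _ _)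
      rcases hpp.dvd_or_dvd h2 with h2 | h2
      · rcases hpp.dvd_or_dvd h2 with h2 | h2
        · have h3 : p ∣ 2 := by exact_mod_cast h2
          have h4 := (Nat.prime_dvd_prime_iff_eq hp Nat.prime_two).mp h3
          subst h4
          exact absurd hodd (by decide)
        · exact hpμ h2
      · exact hpa h2
  refine shift_sum_zero _ (Complex.exp (2 * Real.pi * Complex.I * (h : ℂ) /
    (((p : ℤ) * (m : ℤ) : ℤ) : ℂ) * ((B * m : ℤ) : ℂ))) ?_ (p * m) m ?_ ?_
  · intro h1
    rw [Complex.exp_eq_one_iff] at h1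
    obtain ⟨n, hn⟩ := h1
    apply hpB
    have hkc : (((p : ℤ) * (m : ℤ) : ℤ) : ℂ) ≠ 0 := by exact_mod_cast hk0
    have hpi : (2 * Real.pi * Complex.I : ℂ) ≠ 0 := Complex.two_pi_I_ne_zero
    have e1 : ((h * (B * m) : ℤ) : ℂ) = ((n * (p * m) : ℤ) : ℂ) := by
      apply mul_left_cancel₀ hpi
      rw [div_mul_eq_mul_div, div_eq_iff hkc] at hn
      push_cast at hn ⊢
      linear_combination hn
    have e2 : h * (B * m) = n * (p * m) := by exact_mod_cast e1
    have hm : (m : ℤ) ≠ 0 := right_ne_zero_of_mul hk0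
    refine ⟨n, mul_right_cancel₀ hm ?_⟩
    linear_combination e2
  · intro n
    rw [exp_shift_mul h (p * m) _ (L * (p * r) * μ₁ * n ^ 2 + B * n) 0
      (L * (p * r) * μ₁ * (p * m + 2 * n) + B) hk0 (by push_cast; ring)]
    simp
  · intro n
    refine exp_shift_mul h (p * m) _ (B * m) (L * (p * r) * μ₁ * n ^ 2 + B * n)
      (L * r * μ₁ * (m + 2 * n)) hk0 ?_
    push_cast
    ring
end

section
/- Under these assumptions, for every h ∈ ℤ and every positive integer k with gcd(h,k) = 1, Σ_{j∈{1,2}} (−1)^{j+1} Σ_{α∈𝒮_j} Σ_{ℓ∈{0,…,k−1}²} e^{2πi(h/k)·L·Q(ℓ+α)} = 0, where the inner sum over α runs over the eight members of the family 𝒮_j counted with multiplicity. -/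
open Complex

/-- `e(x) = e^{2πix}` for rational `x`. -/
noncomputable def eQ (x : ℚ) : ℂ := Complex.exp (2 * Real.pi * Complex.I * (x : ℂ))

/-- The two points `x/N` and `1 - x/N = (N-x)/N`. -/
noncomputable def pt (x N : ℕ) : Fin 2 → ℚ := ![(x : ℚ) / N, 1 - (x : ℚ) / N]

theorem eQ_add (x y : ℚ) : eQ (x + y) = eQ x * eQ y := by
  unfold eQ
  rw [← Complex.exp_add]
  push_cast
  ring_nf

theorem eQ_eq_one_iff (x : ℚ) : eQ x = 1 ↔ ∃ n : ℤ, x = n := by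
  unfold eQ
  rw [Complex.exp_eq_one_iff]
  have hpi : (2 * Real.pi * Complex.I : ℂ) ≠ 0 := Complex.two_pi_I_ne_zero
  constructor
  · rintro ⟨n, hn⟩
    refine ⟨n, ?_⟩
    rw [mul_comm] at hn
    have := mul_right_cancel₀ hpi hn
    exact_mod_cast this
  · rintro ⟨n, rfl⟩
    refine ⟨n, ?_⟩
    push_cast
    ring

theorem eQ_congr {x y : ℚ} (n : ℤ) (hn : x - y = n) : eQ x = eQ y := by
  have : x = y + n := by linarith
  rw [this, eQ_add, (eQ_eq_one_iff _).2 ⟨n, rfl⟩, mul_one]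

theorem sum_periodic (k : ℕ) (hk : 0 < k) (g : ℤ → ℂ) (hg : ∀ x y : ℤ, (k : ℤ) ∣ x - y → g x = g y)
    (u c : ℤ) (hu : IsCoprime u (k : ℤ)) :
    ∑ l ∈ Finset.range k, g (u * l + c) = ∑ l ∈ Finset.range k, g l := by
  have : NeZero k := ⟨hk.ne'⟩
  have key : ∀ f : ℤ → ℂ, (∀ x y : ℤ, (k : ℤ) ∣ x - y → f x = f y) →
      ∑ l ∈ Finset.range k, f l = ∑ z : ZMod k, f (z.val : ℤ) := by
    intro f hf
    refine Finset.sum_bij' (fun l _ => (l : ZMod k)) (fun z _ => z.val) ?_ ?_ ?_ ?_ ?_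
    · intros; simp
    · intro z _; simpa using ZMod.val_lt z
    · intro l hl; exact ZMod.val_cast_of_lt (Finset.mem_range.1 hl)
    · intro z _; simp
    · intro l hl; rw [ZMod.val_cast_of_lt (Finset.mem_range.1 hl)]
  rw [key g hg, key (fun x => g (u * x + c))]
  · obtain ⟨p, q, hpq⟩ := hu
    have hpq' : (p : ZMod k) * (u : ZMod k) = 1 := by
      have := congrArg (Int.cast : ℤ → ZMod k) hpq
      push_cast at this
      simpa using this
    have hz : ∀ z : ZMod k, (u : ZMod k) * ((p : ZMod k) * z) = z := by
      intro z
      linear_combination z * hpq'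
    have hz' : ∀ z : ZMod k, (p : ZMod k) * ((u : ZMod k) * z) = z := by
      intro z
      linear_combination z * hpq'
    refine Finset.sum_bij' (fun z _ => (u : ZMod k) * z + c) (fun z _ => (p : ZMod k) * (z - c))
      ?_ ?_ ?_ ?_ ?_
    · intros; simp
    · intros; simp
    · intro z _; simp [hz']
    · intro z _; simp [hz]
    · intro z _
      apply hg
      rw [← ZMod.intCast_eq_intCast_iff_dvd_sub]
      push_cast
      simp
  · intro x y hxy
    apply hg
    have : u * x + c - (u * y + c) = u * (x - y) := by ring
    rw [this]
    exact Dvd.dvd.mul_left hxy u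

/-- The phase. -/
noncomputable def ph (N₁ N₂ m₁ m₃ k : ℕ) (h : ℤ) (x y : ℤ) : ℂ :=
  eQ ((h : ℚ) / k * (m₁ * (x : ℚ) ^ 2 / N₁ + x * y + m₃ * (y : ℚ) ^ 2 / N₂))

/-- The Gauss sum at an integral point. -/
noncomputable def GS (N₁ N₂ m₁ m₃ k : ℕ) (h : ℤ) (a b : ℤ) : ℂ :=
  ∑ l₁ ∈ Finset.range k, ∑ l₂ ∈ Finset.range k,
    ph N₁ N₂ m₁ m₃ k h (a + N₁ * (l₁ : ℤ)) (b + N₂ * (l₂ : ℤ))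

theorem ph_swap (N₁ N₂ m₁ m₃ k : ℕ) (h : ℤ) (x y : ℤ) :
    ph N₁ N₂ m₁ m₃ k h x y = ph N₂ N₁ m₃ m₁ k h y x := by
  unfold ph
  congr 1
  ring

theorem GS_swap (N₁ N₂ m₁ m₃ k : ℕ) (h : ℤ) (a b : ℤ) :
    GS N₁ N₂ m₁ m₃ k h a b = GS N₂ N₁ m₃ m₁ k h b a := by
  unfold GS
  rw [Finset.sum_comm]
  simp only [ph_swap N₁ N₂]

theorem ph_congr_left (N₁ N₂ m₁ m₃ k : ℕ) (hN₁ : 0 < N₁) (hk : 0 < k) (h : ℤ)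
    (x x' y : ℤ) (h1 : (k : ℤ) ∣ x - x') (h2 : (k * N₁ : ℤ) ∣ x ^ 2 - x' ^ 2) :
    ph N₁ N₂ m₁ m₃ k h x y = ph N₁ N₂ m₁ m₃ k h x' y := by
  obtain ⟨c, hc⟩ := h1
  obtain ⟨d, hd⟩ := h2
  unfold ph
  apply eQ_congr (h * (m₁ * d + c * y))
  have hc' : (x : ℚ) - x' = k * c := by exact_mod_cast hc
  have hd' : (x : ℚ) ^ 2 - (x' : ℚ) ^ 2 = k * N₁ * d := by exact_mod_cast hd
  have : (k : ℚ) ≠ 0 := by positivity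
  have : (N₁ : ℚ) ≠ 0 := by positivity
  have e : (h : ℚ) / k * (m₁ * (x : ℚ) ^ 2 / N₁ + x * y + m₃ * (y : ℚ) ^ 2 / N₂) -
    (h : ℚ) / k * (m₁ * (x' : ℚ) ^ 2 / N₁ + x' * y + m₃ * (y : ℚ) ^ 2 / N₂) =
    h / k * (m₁ * ((x : ℚ) ^ 2 - (x' : ℚ) ^ 2) / N₁ + (x - x') * y) := by ring
  rw [e, hc', hd']
  push_cast
  field_simp

theorem ph_mul (N₁ N₂ m₁ m₃ k : ℕ) (hN₁ : 0 < N₁) (hN₂ : 0 < N₂) (hk : 0 < k) (h : ℤ)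
    (u x y : ℤ) (h1 : (k * N₁ * N₂ : ℤ) ∣ u ^ 2 - 1) :
    ph N₁ N₂ m₁ m₃ k h (u * x) (u * y) = ph N₁ N₂ m₁ m₃ k h x y := by
  obtain ⟨d, hd⟩ := h1
  unfold ph
  apply eQ_congr (h * d * (m₁ * x ^ 2 * N₂ + x * y * N₁ * N₂ + m₃ * y ^ 2 * N₁))
  have hd' : (u : ℚ) ^ 2 - 1 = k * N₁ * N₂ * d := by exact_mod_cast hd
  have : (k : ℚ) ≠ 0 := by positivity
  have : (N₁ : ℚ) ≠ 0 := by positivity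
  have : (N₂ : ℚ) ≠ 0 := by positivity
  have e : (h : ℚ) / k * (m₁ * ((u * x : ℤ) : ℚ) ^ 2 / N₁ + (u * x : ℤ) * (u * y : ℤ)
      + m₃ * ((u * y : ℤ) : ℚ) ^ 2 / N₂) -
    (h : ℚ) / k * (m₁ * (x : ℚ) ^ 2 / N₁ + x * y + m₃ * (y : ℚ) ^ 2 / N₂) =
    h / k * ((u : ℚ) ^ 2 - 1) * (m₁ * (x : ℚ) ^ 2 / N₁ + x * y + m₃ * (y : ℚ) ^ 2 / N₂) := by
    push_cast
    ring
  rw [e, hd']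
  push_cast
  field_simp

theorem ph_per (N₁ N₂ m₁ m₃ k : ℕ) (hN₁ : 0 < N₁) (hk : 0 < k) (h : ℤ) (a y : ℤ)
    (l l' : ℤ) (hl : (k : ℤ) ∣ l - l') :
    ph N₁ N₂ m₁ m₃ k h (a + N₁ * l) y = ph N₁ N₂ m₁ m₃ k h (a + N₁ * l') y := by
  obtain ⟨c, hc⟩ := hl
  apply ph_congr_left _ _ _ _ _ hN₁ hk
  · exact ⟨N₁ * c, by linear_combination (N₁ : ℤ) * hc⟩
  · exact ⟨c * (2 * a + N₁ * l + N₁ * l'),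
      by linear_combination (N₁ : ℤ) * (2 * a + N₁ * l + N₁ * l') * hc⟩

theorem ph_per_right (N₁ N₂ m₁ m₃ k : ℕ) (hN₂ : 0 < N₂) (hk : 0 < k) (h : ℤ) (x b : ℤ)
    (l l' : ℤ) (hl : (k : ℤ) ∣ l - l') :
    ph N₁ N₂ m₁ m₃ k h x (b + N₂ * l) = ph N₁ N₂ m₁ m₃ k h x (b + N₂ * l') := by
  rw [ph_swap, ph_swap N₁]
  exact ph_per _ _ _ _ _ hN₂ hk _ _ _ _ _ hl

theorem GS_per (N₁ N₂ m₁ m₃ k : ℕ) (hN₁ : 0 < N₁) (hk : 0 < k) (h : ℤ) (a a' b : ℤ)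
    (ha : (N₁ : ℤ) ∣ a - a') : GS N₁ N₂ m₁ m₃ k h a b = GS N₁ N₂ m₁ m₃ k h a' b := by
  obtain ⟨c, hc⟩ := ha
  have := sum_periodic k hk
    (fun l => ∑ l₂ ∈ Finset.range k, ph N₁ N₂ m₁ m₃ k h (a' + N₁ * l) (b + N₂ * (l₂ : ℤ)))
    (fun x y hxy => Finset.sum_congr rfl fun l₂ _ => ph_per _ _ _ _ _ hN₁ hk _ _ _ _ _ hxy)
    1 c isCoprime_one_left
  unfold GS
  rw [← this]
  refine Finset.sum_congr rfl fun l₁ _ => Finset.sum_congr rfl fun l₂ _ => ?_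
  congr 1
  linear_combination hc

theorem GS_per_right (N₁ N₂ m₁ m₃ k : ℕ) (hN₂ : 0 < N₂) (hk : 0 < k) (h : ℤ) (a b b' : ℤ)
    (hb : (N₂ : ℤ) ∣ b - b') : GS N₁ N₂ m₁ m₃ k h a b = GS N₁ N₂ m₁ m₃ k h a b' := by
  rw [GS_swap, GS_swap N₁]
  exact GS_per _ _ _ _ _ hN₂ hk _ _ _ _ hb

theorem GS_mul (N₁ N₂ m₁ m₃ k : ℕ) (hN₁ : 0 < N₁) (hN₂ : 0 < N₂) (hk : 0 < k) (h : ℤ)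
    (u a b : ℤ) (h1 : (k * N₁ * N₂ : ℤ) ∣ u ^ 2 - 1) :
    GS N₁ N₂ m₁ m₃ k h (u * a) (u * b) = GS N₁ N₂ m₁ m₃ k h a b := by
  have hu : IsCoprime u (k : ℤ) := by
    obtain ⟨d, hd⟩ := h1
    exact ⟨u, -(N₁ * N₂ * d), by linear_combination hd⟩
  have e1 := sum_periodic k hk
    (fun l => ∑ l₂ ∈ Finset.range k, ph N₁ N₂ m₁ m₃ k h (u * a + N₁ * l) (u * b + N₂ * (l₂ : ℤ)))
    (fun x y hxy => Finset.sum_congr rfl fun l₂ _ => ph_per _ _ _ _ _ hN₁ hk _ _ _ _ _ hxy)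
    u 0 hu
  unfold GS
  rw [← e1]
  refine Finset.sum_congr rfl fun l₁ _ => ?_
  have e2 := sum_periodic k hk
    (fun l => ph N₁ N₂ m₁ m₃ k h (u * a + N₁ * (u * l₁ + 0)) (u * b + N₂ * l))
    (fun x y hxy => ph_per_right _ _ _ _ _ hN₂ hk _ _ _ _ _ hxy)
    u 0 hu
  refine Eq.trans e2.symm ?_
  refine Finset.sum_congr rfl fun l₂ _ => ?_
  rw [← ph_mul N₁ N₂ m₁ m₃ k hN₁ hN₂ hk h u (a + _) _ h1]
  congr 1 <;> ring

theorem GS_neg (N₁ N₂ m₁ m₃ k : ℕ) (hN₁ : 0 < N₁) (hN₂ : 0 < N₂) (hk : 0 < k) (h : ℤ)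
    (a b : ℤ) : GS N₁ N₂ m₁ m₃ k h (-a) (-b) = GS N₁ N₂ m₁ m₃ k h a b := by
  have := GS_mul N₁ N₂ m₁ m₃ k hN₁ hN₂ hk h (-1) a b (by norm_num)
  simpa using this

theorem GS_zero (N₁ N₂ m₁ m₃ k : ℕ) (hN₁ : 0 < N₁) (hk : 0 < k) (h : ℤ)
    (a b : ℤ) (p : ℕ) (hp : p.Prime) (hp2 : p ≠ 2) (hpN : p ∣ N₁) (hpk : p ∣ k)
    (hpm : ¬ p ∣ m₁) (hph : ¬ (p : ℤ) ∣ h) (hpa : ¬ (p : ℤ) ∣ a) :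
    GS N₁ N₂ m₁ m₃ k h a b = 0 := by
  unfold GS
  rw [Finset.sum_comm]
  refine Finset.sum_eq_zero fun l₂ _ => ?_
  set y : ℤ := b + N₂ * (l₂ : ℤ)
  obtain ⟨n, hn⟩ := hpN
  obtain ⟨c, hc⟩ := hpk
  have hp0 : (p : ℚ) ≠ 0 := by exact_mod_cast hp.ne_zero
  have hc0 : (c : ℚ) ≠ 0 := by
    rintro h0
    have : c = 0 := by exact_mod_cast h0
    subst this; simp at hc; omega
  have hn0 : (n : ℚ) ≠ 0 := by
    rintro h0
    have : n = 0 := by exact_mod_cast h0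
    subst this; simp at hn; omega
  have e := sum_periodic k hk (fun l => ph N₁ N₂ m₁ m₃ k h (a + N₁ * l) y)
    (fun x y hxy => ph_per _ _ _ _ _ hN₁ hk _ _ _ _ _ hxy) 1 c isCoprime_one_left
  set ζ : ℂ := eQ ((2 * h * m₁ * a : ℚ) / p)
  have hζ : ζ ≠ 1 := by
    intro h1
    obtain ⟨m, hm⟩ := (eQ_eq_one_iff _).1 h1
    rw [div_eq_iff hp0] at hm
    have hm' : 2 * h * m₁ * a = m * p := by exact_mod_cast hm
    have hd : (p : ℤ) ∣ 2 * h * m₁ * a := ⟨m, by rw [hm']; ring⟩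
    have hpp : Prime (p : ℤ) := Nat.prime_iff_prime_int.1 hp
    rcases hpp.dvd_or_dvd hd with hd | hd
    · rcases hpp.dvd_or_dvd hd with hd | hd
      · rcases hpp.dvd_or_dvd hd with hd | hd
        · have : p ∣ 2 := by exact_mod_cast hd
          exact hp2 ((Nat.prime_dvd_prime_iff_eq hp Nat.prime_two).1 this)
        · exact hph hd
      · exact hpm (by exact_mod_cast hd)
    · exact hpa hd
  have e2 : ∀ l : ℤ, ph N₁ N₂ m₁ m₃ k h (a + N₁ * (1 * l + c)) y =
      ζ * ph N₁ N₂ m₁ m₃ k h (a + N₁ * l) y := by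
    intro l
    unfold ph
    rw [← eQ_add]
    apply eQ_congr (h * (2 * m₁ * n * l + m₁ * n * c + n * y))
    rw [hn, hc]
    push_cast
    field_simp
    ring
  simp only [e2] at e
  rw [← Finset.mul_sum] at e
  have : (ζ - 1) * ∑ l ∈ Finset.range k, ph N₁ N₂ m₁ m₃ k h (a + N₁ * (l : ℤ)) y = 0 := by
    rw [sub_mul, e, one_mul, sub_self]
  exact (mul_eq_zero.1 this).resolve_left (sub_ne_zero.2 hζ)

theorem exists_split (m : ℕ) (W : ℕ) (hW : 0 < W) : ∃ A B : ℕ, W = A * B ∧ Nat.Coprime B m ∧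
    ∀ p : ℕ, p.Prime → p ∣ A → p ∣ m := by
  induction W using Nat.strong_induction_on with
  | _ W ih =>
    by_cases hc : Nat.Coprime W m
    · exact ⟨1, W, by simp, hc, fun p hp h1 => absurd (Nat.dvd_one.1 h1) hp.ne_one⟩
    · obtain ⟨p, hp, hpW, hpm⟩ := Nat.Prime.not_coprime_iff_dvd.1 hc
      obtain ⟨V, rfl⟩ := hpW
      have hV : 0 < V := Nat.pos_of_mul_pos_left hW
      obtain ⟨A, B, hAB, hB, hA⟩ := ih V (by nlinarith [hp.two_le]) hV
      refine ⟨p * A, B, by rw [hAB]; ring, hB, fun q hq hqA => ?_⟩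
      rcases (Nat.Prime.dvd_mul hq).1 hqA with h1 | h1
      · rwa [(Nat.prime_dvd_prime_iff_eq hq hp).1 h1]
      · exact hA q hq h1

/-- Changing `a` away from the primes dividing `k`. -/
theorem GS_stepA (N₁ N₂ m₁ m₃ k : ℕ) (hN₁ : 0 < N₁) (hk : 0 < k) (h : ℤ) (a a' b : ℤ)
    (P T : ℕ) (hPT : N₁ = P * T) (hT : Nat.Coprime T (k * P))
    (h1 : (P : ℤ) ∣ a - a') (h2 : (T : ℤ) ∣ a ^ 2 - a' ^ 2) :
    GS N₁ N₂ m₁ m₃ k h a b = GS N₁ N₂ m₁ m₃ k h a' b := by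
  have hcop : IsCoprime (T : ℤ) ((k * P : ℕ) : ℤ) := Nat.isCoprime_iff_coprime.2 hT
  obtain ⟨x, y, hxy⟩ := hcop
  push_cast at hxy
  obtain ⟨d, hd⟩ := h1
  obtain ⟨e, he⟩ := h2
  -- c ≡ 0 mod kP, c ≡ a' - a mod T
  have key : GS N₁ N₂ m₁ m₃ k h a b = GS N₁ N₂ m₁ m₃ k h (a + y * (k * P) * (a' - a)) b := by
    unfold GS
    refine Finset.sum_congr rfl fun l₁ _ => Finset.sum_congr rfl fun l₂ _ => ?_
    apply ph_congr_left _ _ _ _ _ hN₁ hk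
    · exact ⟨-(y * P * (a' - a)), by ring⟩
    · rw [hPT]
      push_cast
      refine ⟨y * (e - (a' - a) * (a - a') * x + (2 * P * l₁ * (a - a'))), ?_⟩
      linear_combination (k * P * y : ℤ) * he - (y * k * P * (a' - a) ^ 2 : ℤ) * hxy
  rw [key]
  apply GS_per _ _ _ _ _ hN₁ hk
  refine ⟨x * d, ?_⟩
  rw [hPT]
  push_cast
  linear_combination (x * T : ℤ) * hd + (a' - a) * hxy

theorem two_split (v : ℕ) (a a' : ℤ) (ha : Odd a) (ha' : Odd a')
    (h1 : (2 : ℤ) * 2 ^ v ∣ a ^ 2 - a' ^ 2) : (2 : ℤ) ^ v ∣ a - a' ∨ (2 : ℤ) ^ v ∣ a + a' := by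
  obtain ⟨m, hm⟩ := ha
  obtain ⟨n, hn⟩ := ha'
  obtain ⟨d, hd⟩ := h1
  have h2 : (2 : ℤ) ^ v * d = 2 * ((m - n) * (m + n + 1)) := by
    subst hm hn
    linarith
  rcases Int.even_or_odd (m - n) with hmn | hmn
  · left
    have ho : Odd (m + n + 1) := by
      rw [show m + n + 1 = (m - n) + (2 * n + 1) by ring]
      exact hmn.add_odd ⟨n, rfl⟩
    have hc : IsCoprime ((2 : ℤ) ^ v) (m + n + 1) :=
      IsCoprime.pow_left (Int.isCoprime_two_left.2 ho)
    refine hc.dvd_of_dvd_mul_right ⟨d, ?_⟩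
    rw [h2, hm, hn]
    ring
  · right
    have hc : IsCoprime ((2 : ℤ) ^ v) (m - n) :=
      IsCoprime.pow_left (Int.isCoprime_two_left.2 hmn)
    refine hc.dvd_of_dvd_mul_right ⟨d, ?_⟩
    rw [h2, hm, hn]
    ring

theorem GS_stepB (N₁ N₂ m₁ m₃ k : ℕ) (hN₁ : 0 < N₁) (hN₂ : 0 < N₂) (hk : 0 < k) (h : ℤ)
    (hbad : ∀ p : ℕ, p.Prime → p ≠ 2 → p ∣ N₁ → p ∣ N₂ → p ∣ k → False)
    (v M : ℕ) (hM : Odd M) (hv : N₁ = 2 ^ v * M)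
    (a a' : ℤ) (hac : IsCoprime a (N₁ : ℤ))
    (h2 : (2 : ℤ) ^ v ∣ a - a') (hsq : (N₁ : ℤ) ∣ a ^ 2 - a' ^ 2) (b : ℤ) :
    GS N₁ N₂ m₁ m₃ k h a b = GS N₁ N₂ m₁ m₃ k h a' b := by
  have hM0 : 0 < M := hM.pos
  obtain ⟨P, T, hPT, hTk, hPk⟩ := exists_split k M hM0
  have hPN : P ∣ N₁ := by rw [hv, hPT]; exact ⟨2 ^ v * T, by ring⟩
  have hPodd : ∀ p : ℕ, p.Prime → p ∣ P → p ≠ 2 := by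
    rintro p hp hpP rfl
    have : 2 ∣ M := hpP.trans ⟨T, hPT⟩
    exact (Nat.not_even_iff_odd.2 hM) (even_iff_two_dvd.2 this)
  set M2 : ℕ := Int.gcd (P : ℤ) (a + a') with hM2
  set M1 : ℕ := Int.gcd (P : ℤ) (a - a') with hM1
  have hM2P : M2 ∣ P := by
    have := Int.gcd_dvd_left (P : ℤ) (a + a')
    exact_mod_cast this
  have hM1P : M1 ∣ P := by
    have := Int.gcd_dvd_left (P : ℤ) (a - a')
    exact_mod_cast this
  have hM2a : (M2 : ℤ) ∣ a + a' := Int.gcd_dvd_right _ _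
  have hM1a : (M1 : ℤ) ∣ a - a' := Int.gcd_dvd_right _ _
  have hM12 : Nat.Coprime M1 M2 := by
    refine Nat.Coprime.symm (Nat.coprime_of_dvd fun p hp h1 h2 => ?_)
    have hpp : Prime (p : ℤ) := Nat.prime_iff_prime_int.1 hp
    have e1 : (p : ℤ) ∣ a + a' := (Int.natCast_dvd_natCast.2 h1).trans hM2a
    have e2 : (p : ℤ) ∣ a - a' := (Int.natCast_dvd_natCast.2 h2).trans hM1a
    have e3 : (p : ℤ) ∣ 2 * a := by
      have := dvd_add e1 e2
      rwa [show a + a' + (a - a') = 2 * a by ring] at this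
    rcases hpp.dvd_or_dvd e3 with e3 | e3
    · have : p ∣ 2 := by exact_mod_cast e3
      exact hPodd p hp (h1.trans hM2P) ((Nat.prime_dvd_prime_iff_eq hp Nat.prime_two).1 this)
    · have e4 : (p : ℤ) ∣ (N₁ : ℤ) := Int.natCast_dvd_natCast.2 ((h1.trans hM2P).trans hPN)
      exact hpp.not_unit (hac.isUnit_of_dvd' e3 e4)
  have hPM : (P : ℤ) ∣ (M1 : ℤ) * M2 := by
    have e1 : (P : ℤ) ∣ (a - a') * (a + a') := by
      rw [show (a - a') * (a + a') = a ^ 2 - a' ^ 2 by ring]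
      exact (Int.natCast_dvd_natCast.2 hPN).trans hsq
    obtain ⟨w, hw⟩ := e1
    have g1 := Int.gcd_eq_gcd_ab (P : ℤ) (a - a')
    have g2 := Int.gcd_eq_gcd_ab (P : ℤ) (a + a')
    rw [hM1, hM2, g1, g2]
    generalize Int.gcdA (P : ℤ) (a - a') = x1
    generalize Int.gcdA (P : ℤ) (a + a') = x2
    generalize Int.gcdB (P : ℤ) (a - a') = y1
    generalize Int.gcdB (P : ℤ) (a + a') = y2
    exact ⟨x1 * (P * x2 + (a + a') * y2) + (a - a') * y1 * x2 + y1 * y2 * w,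
      by linear_combination y1 * y2 * hw⟩
  have hW0 : 0 < k * N₁ * N₂ := by positivity
  obtain ⟨W2, W', hW, hW'c, hW2⟩ := exists_split M2 (k * N₁ * N₂) hW0
  have hcopW : ∀ n : ℕ, (∀ p : ℕ, p.Prime → p ∣ n → p ∣ M2 → False) → Nat.Coprime n W2 :=
    fun n hn => Nat.coprime_of_dvd fun p hp h1 h2 => hn p hp h1 (hW2 p hp h2)
  have hWW : Nat.Coprime W' W2 := hcopW _ fun p hp h1 h2 =>
    hp.one_lt.ne' (Nat.eq_one_of_dvd_coprimes hW'c h1 h2)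
  obtain ⟨x, y, hxy⟩ := Nat.isCoprime_iff_coprime.2 hWW
  -- x W' + y W2 = 1 ; u = 1 mod W', -1 mod W2
  set u : ℤ := y * W2 - x * W' with hu
  have hu1 : (W' : ℤ) ∣ u - 1 := ⟨-2 * x, by rw [hu]; linear_combination hxy⟩
  have hu2 : (W2 : ℤ) ∣ u + 1 := ⟨2 * y, by rw [hu]; linear_combination -hxy⟩
  have huu : (k * N₁ * N₂ : ℤ) ∣ u ^ 2 - 1 := by
    have : (k * N₁ * N₂ : ℤ) = W2 * W' := by exact_mod_cast hW
    rw [this, show u ^ 2 - 1 = (u + 1) * (u - 1) by ring]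
    exact mul_dvd_mul hu2 hu1
  have hdvdW' : ∀ n : ℕ, n ∣ k * N₁ * N₂ → (∀ p : ℕ, p.Prime → p ∣ n → p ∣ M2 → False) →
      (n : ℤ) ∣ u - 1 := by
    intro n hn hnp
    rw [hW] at hn
    exact (Int.natCast_dvd_natCast.2 ((hcopW n hnp).dvd_of_dvd_mul_left hn)).trans hu1
  have huN2 : (N₂ : ℤ) ∣ u - 1 := hdvdW' _ ⟨k * N₁, by ring⟩ fun p hp h1 h2 =>
    hbad p hp (hPodd p hp (h2.trans hM2P)) ((h2.trans hM2P).trans hPN) h1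
      (hPk p hp (h2.trans hM2P))
  have hu2v : ((2 ^ v : ℕ) : ℤ) ∣ u - 1 := hdvdW' _ ⟨k * M * N₂, by rw [hv]; ring⟩
    fun p hp h1 h2 => hPodd p hp (h2.trans hM2P)
      ((Nat.prime_dvd_prime_iff_eq hp Nat.prime_two).1 (hp.dvd_of_dvd_pow h1))
  have hPW : P ∣ k * N₁ * N₂ := hPN.trans ⟨k * N₂, by ring⟩
  have huM1 : (M1 : ℤ) ∣ u - 1 := hdvdW' _ (hM1P.trans hPW) fun p hp h1 h2 =>
    hp.one_lt.ne' (Nat.eq_one_of_dvd_coprimes hM12 h1 h2)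
  have huM2 : (M2 : ℤ) ∣ u + 1 := by
    have e : M2 ∣ W2 := by
      have e1 := hM2P.trans hPW
      rw [hW] at e1
      exact hW'c.symm.dvd_of_dvd_mul_right e1
    exact (Int.natCast_dvd_natCast.2 e).trans hu2
  have e1 : (P : ℤ) ∣ u * a - a' := by
    refine hPM.trans (IsCoprime.mul_dvd (Nat.isCoprime_iff_coprime.2 hM12) ?_ ?_)
    · rw [show u * a - a' = (u - 1) * a + (a - a') by ring]
      exact dvd_add (huM1.mul_right a) hM1a
    · rw [show u * a - a' = (u + 1) * a - (a + a') by ring]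
      exact dvd_sub (huM2.mul_right a) hM2a
  have e2 : ((2 ^ v : ℕ) : ℤ) ∣ u * a - a' := by
    rw [show u * a - a' = (u - 1) * a + (a - a') by ring]
    exact dvd_add (hu2v.mul_right a) (by exact_mod_cast h2)
  have c2 : ∀ n : ℕ, n ∣ M → Nat.Coprime (2 ^ v) n := fun n hn =>
    Nat.Coprime.pow_left _ ((Nat.coprime_two_left).2 (Odd.of_dvd_nat hM hn))
  have e3 : ((2 ^ v * P : ℕ) : ℤ) ∣ u * a - a' := by
    rw [Nat.cast_mul]
    exact IsCoprime.mul_dvd (Nat.isCoprime_iff_coprime.2 (c2 P ⟨T, hPT⟩)) e2 e1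
  have hTP : Nat.Coprime T P := Nat.coprime_of_dvd fun p hp h1 h2 =>
    hp.one_lt.ne' (Nat.eq_one_of_dvd_coprimes hTk h1 (hPk p hp h2))
  have hTc : Nat.Coprime T (k * (2 ^ v * P)) :=
    hTk.mul_right (((c2 T ⟨P, by rw [hPT]; ring⟩).symm).mul_right hTP)
  have hTN : (T : ℤ) ∣ N₁ := Int.natCast_dvd_natCast.2 ⟨2 ^ v * P, by rw [hv, hPT]; ring⟩
  have e4 : (T : ℤ) ∣ (u * a) ^ 2 - a' ^ 2 := by
    rw [show (u * a) ^ 2 - a' ^ 2 = (u ^ 2 - 1) * a ^ 2 + (a ^ 2 - a' ^ 2) by ring]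
    refine dvd_add (Dvd.dvd.mul_right ?_ _) (hTN.trans hsq)
    exact hTN.trans (Dvd.dvd.trans ⟨k * N₂, by ring⟩ huu)
  rw [← GS_mul N₁ N₂ m₁ m₃ k hN₁ hN₂ hk h u a b huu,
    GS_per_right N₁ N₂ m₁ m₃ k hN₂ hk h (u * a) (u * b) b
      (by rw [show u * b - b = (u - 1) * b by ring]; exact huN2.mul_right b)]
  exact GS_stepA N₁ N₂ m₁ m₃ k hN₁ hk h _ _ b (2 ^ v * P) T (by rw [hv, hPT]; ring) hTc e3 e4

theorem GS_stepC (N₁ N₂ m₁ m₃ k : ℕ) (hN₁ : 0 < N₁) (hN₂ : 0 < N₂) (hk : 0 < k) (h : ℤ)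
    (hN₁e : Even N₁)
    (hbad : ∀ p : ℕ, p.Prime → p ≠ 2 → p ∣ N₁ → p ∣ N₂ → p ∣ k → False)
    (r s : ℕ) (hr : Nat.gcd r N₁ = 1) (hs : Nat.gcd s N₁ = 1)
    (hrs : (r : ℤ) ^ 2 ≡ (s : ℤ) ^ 2 [ZMOD (2 * N₁)]) :
    (∀ b : ℤ, GS N₁ N₂ m₁ m₃ k h s b = GS N₁ N₂ m₁ m₃ k h r b) ∨
    (∀ b : ℤ, GS N₁ N₂ m₁ m₃ k h s b = GS N₁ N₂ m₁ m₃ k h (-r) b) := by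
  obtain ⟨v, M, hM2, hv⟩ := Nat.exists_eq_pow_mul_and_not_dvd hN₁.ne' 2 (by norm_num)
  have hM : Odd M := Nat.not_even_iff_odd.1 fun h => hM2 (even_iff_two_dvd.1 h)
  have odd_of : ∀ x : ℕ, Nat.gcd x N₁ = 1 → Odd (x : ℤ) := by
    intro x hx
    have : Odd x := Nat.not_even_iff_odd.1 fun hxe => by
      have := Nat.dvd_gcd (even_iff_two_dvd.1 hxe) (even_iff_two_dvd.1 hN₁e)
      rw [hx] at this
      norm_num at this
    exact_mod_cast this
  have hd : (2 * N₁ : ℤ) ∣ (s : ℤ) ^ 2 - (r : ℤ) ^ 2 := hrs.dvd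
  have hd1 : (N₁ : ℤ) ∣ (s : ℤ) ^ 2 - (r : ℤ) ^ 2 := Dvd.dvd.trans ⟨2, by ring⟩ hd
  have hd2 : (2 : ℤ) * 2 ^ v ∣ (s : ℤ) ^ 2 - (r : ℤ) ^ 2 :=
    Dvd.dvd.trans ⟨M, by rw [hv]; push_cast; ring⟩ hd
  have hsc : IsCoprime (s : ℤ) (N₁ : ℤ) := Nat.isCoprime_iff_coprime.2 hs
  rcases two_split v s r (odd_of s hs) (odd_of r hr) hd2 with h2 | h2
  · left
    intro b
    exact GS_stepB N₁ N₂ m₁ m₃ k hN₁ hN₂ hk h hbad v M hM hv _ _ hsc h2 hd1 b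
  · right
    intro b
    exact GS_stepB N₁ N₂ m₁ m₃ k hN₁ hN₂ hk h hbad v M hM hv _ _ hsc (by simpa using h2)
      (by simpa using hd1) b

theorem family_gauss_sum_vanishes
    (N₁ N₂ L R₁ R₂ μ₁ μ₃ : ℕ) (σ₂ : ℚ)
    (hN₁ : 0 < N₁) (hN₂ : 0 < N₂) (hN₁e : Even N₁) (hN₂e : Even N₂)
    (hL : L = Nat.gcd N₁ N₂) (hR₁ : N₁ = L * R₁) (hR₂ : N₂ = L * R₂)
    (hμ₁ : 0 < μ₁) (hμ₃ : 0 < μ₃)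
    (hcop₁ : Nat.gcd R₁ μ₁ = 1) (hcop₃ : Nat.gcd R₂ μ₃ = 1)
    (hσ₂ : 2 * σ₂ = (L : ℚ) * R₁ * R₂)
    (hodd : ∀ p q : ℕ, p.Prime → q.Prime → Odd p → Odd q →
      p ∣ Nat.gcd μ₁ μ₃ → q ∣ Nat.gcd μ₁ μ₃ → p = q)
    (hLμ : Nat.gcd L (Nat.gcd μ₁ μ₃) = 1)
    (h4L : ¬ (4 ∣ L) →
      (Even R₁ ∧ ¬ Even R₂ ∧ ¬ Even μ₃) ∨ (¬ Even R₁ ∧ Even R₂ ∧ ¬ Even μ₃) ∨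
        (¬ Even R₁ ∧ ¬ Even R₂ ∧ Even μ₃))
    (r₁ s₁ r₂ s₂ : ℕ) (hr₁ : 0 < r₁) (hs₁ : 0 < s₁) (hr₂ : 0 < r₂) (hs₂ : 0 < s₂)
    (hr₁c : Nat.gcd r₁ N₁ = 1) (hs₁c : Nat.gcd s₁ N₁ = 1)
    (hr₂c : Nat.gcd r₂ N₂ = 1) (hs₂c : Nat.gcd s₂ N₂ = 1)
    (hrs₁ : (r₁ : ℤ) ^ 2 ≡ (s₁ : ℤ) ^ 2 [ZMOD (2 * N₁)])
    (hrs₂ : (r₂ : ℤ) ^ 2 ≡ (s₂ : ℤ) ^ 2 [ZMOD (2 * N₂)])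
    (h : ℤ) (k : ℕ) (hk : 0 < k) (hhk : Int.gcd h (k : ℤ) = 1)
    -- the quadratic form `Q(x,y) = σ₁x² + 2σ₂xy + σ₃y²` with `σ₁ = R₁μ₁`, `σ₃ = R₂μ₃`
    (Q : ℚ → ℚ → ℚ)
    (hQ : ∀ x y : ℚ, Q x y = (R₁ * μ₁ : ℕ) * x ^ 2 + 2 * σ₂ * x * y + (R₂ * μ₃ : ℕ) * y ^ 2)
    -- `S α` is the inner sum over `ℓ ∈ {0,…,k−1}²`
    (S : ℚ → ℚ → ℂ)
    (hS : ∀ α₁ α₂ : ℚ, S α₁ α₂ = ∑ ℓ₁ ∈ Finset.range k, ∑ ℓ₂ ∈ Finset.range k,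
      eQ ((h : ℚ) / (k : ℚ) * L * Q ((ℓ₁ : ℚ) + α₁) ((ℓ₂ : ℚ) + α₂))) :
    (∑ i : Fin 2, ∑ j : Fin 2,
        (S (pt r₁ N₁ i) (pt r₂ N₂ j) + S (pt s₁ N₁ i) (pt s₂ N₂ j))) -
      (∑ i : Fin 2, ∑ j : Fin 2,
        (S (pt r₁ N₁ i) (pt s₂ N₂ j) + S (pt s₁ N₁ i) (pt r₂ N₂ j))) = 0 := by
  have hkQ : (k : ℚ) ≠ 0 := by positivity
  have hL0 : 0 < L := by
    rw [hL]; exact Nat.gcd_pos_of_pos_left _ hN₁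
  have hR₁0 : R₁ ≠ 0 := by rintro rfl; simp at hR₁; omega
  have hR₂0 : R₂ ≠ 0 := by rintro rfl; simp at hR₂; omega
  have hLQ : (L : ℚ) ≠ 0 := by positivity
  have hR₁Q : (R₁ : ℚ) ≠ 0 := by exact_mod_cast hR₁0
  have hR₂Q : (R₂ : ℚ) ≠ 0 := by exact_mod_cast hR₂0
  have hSG : ∀ a b : ℤ, S ((a : ℚ) / N₁) ((b : ℚ) / N₂) = GS N₁ N₂ μ₁ μ₃ k h a b := by
    intro a b
    rw [hS]
    unfold GS ph
    refine Finset.sum_congr rfl fun l₁ _ => Finset.sum_congr rfl fun l₂ _ => ?_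
    congr 1
    rw [hQ, hσ₂, hR₁, hR₂]
    push_cast
    field_simp
    ring
  have hN₁Q : (N₁ : ℚ) ≠ 0 := by positivity
  have hN₂Q : (N₂ : ℚ) ≠ 0 := by positivity
  have hp0 : ∀ x N : ℕ, pt x N 0 = ((x : ℤ) : ℚ) / N := by intro x N; simp [pt]
  have hp1 : ∀ x N : ℕ, (N : ℚ) ≠ 0 → pt x N 1 = ((N - x : ℤ) : ℚ) / N := by
    intro x N hN
    simp only [pt, Matrix.cons_val_one, Matrix.cons_val_fin_one]
    push_cast
    field_simp
  have hl : ∀ (x : ℕ) (b : ℤ),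
      GS N₁ N₂ μ₁ μ₃ k h (N₁ - x) b = GS N₁ N₂ μ₁ μ₃ k h (-x) b := fun x b =>
    GS_per _ _ _ _ _ hN₁ hk _ _ _ _ ⟨1, by ring⟩
  have hr : ∀ (x : ℕ) (a : ℤ),
      GS N₁ N₂ μ₁ μ₃ k h a (N₂ - x) = GS N₁ N₂ μ₁ μ₃ k h a (-x) := fun x a =>
    GS_per_right _ _ _ _ _ hN₂ hk _ _ _ _ ⟨1, by ring⟩
  simp only [Fin.sum_univ_two, hp0, hp1 _ _ hN₁Q, hp1 _ _ hN₂Q, hSG, hl, hr]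
  by_cases hbad : ∀ p : ℕ, p.Prime → p ≠ 2 → p ∣ N₁ → p ∣ N₂ → p ∣ k → False
  · have hneg := GS_neg N₁ N₂ μ₁ μ₃ k hN₁ hN₂ hk h
    have hneg' : ∀ a b : ℤ, GS N₁ N₂ μ₁ μ₃ k h (-a) b = GS N₁ N₂ μ₁ μ₃ k h a (-b) := by
      intro a b
      rw [← hneg a (-b), neg_neg]
    have h1 := GS_stepC N₁ N₂ μ₁ μ₃ k hN₁ hN₂ hk h hN₁e hbad r₁ s₁ hr₁c hs₁c hrs₁
    have h2 := GS_stepC N₂ N₁ μ₃ μ₁ k hN₂ hN₁ hk h hN₂e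
      (fun p a b c d e => hbad p a b d c e) r₂ s₂ hr₂c hs₂c hrs₂
    simp only [GS_swap N₂ N₁] at h2
    simp only [hneg'] at h1 ⊢
    simp only [neg_neg]
    rcases h1 with h1 | h1 <;> rcases h2 with h2 | h2 <;>
      simp only [h1, h2, neg_neg, ← hneg' _ (s₂ : ℤ)] <;>
      simp only [hneg', neg_neg] <;> ring
  · push Not at hbad
    obtain ⟨p, hp, hp2, hpN₁, hpN₂, hpk, -⟩ := hbad
    have hph : ¬ (p : ℤ) ∣ h := by
      intro hd
      have : (p : ℤ) ∣ Int.gcd h k := Int.dvd_coe_gcd hd (Int.natCast_dvd_natCast.2 hpk)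
      rw [hhk] at this
      exact hp.one_lt.ne' (Nat.dvd_one.1 (by exact_mod_cast this))
    have hpx : ∀ x N : ℕ, p ∣ N → Nat.gcd x N = 1 → ¬ (p : ℤ) ∣ (x : ℤ) := by
      intro x N hN hx hd
      have := Nat.dvd_gcd (Int.natCast_dvd_natCast.1 hd) hN
      rw [hx] at this
      exact hp.one_lt.ne' (Nat.dvd_one.1 this)
    have hpL : p ∣ L := by rw [hL]; exact Nat.dvd_gcd hpN₁ hpN₂
    by_cases hm : p ∣ μ₁
    · have hm3 : ¬ p ∣ μ₃ := by
        intro hm3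
        have := Nat.dvd_gcd hpL (Nat.dvd_gcd hm hm3)
        rw [hLμ] at this
        exact hp.one_lt.ne' (Nat.dvd_one.1 this)
      have z : ∀ a b : ℤ, ¬ (p : ℤ) ∣ b → GS N₁ N₂ μ₁ μ₃ k h a b = 0 := by
        intro a b hb
        rw [GS_swap]
        exact GS_zero _ _ _ _ _ hN₂ hk _ _ _ p hp hp2 hpN₂ hpk hm3 hph hb
      have z1 := hpx r₂ N₂ hpN₂ hr₂c
      have z2 := hpx s₂ N₂ hpN₂ hs₂c
      have z3 : ¬ (p : ℤ) ∣ -(r₂ : ℤ) := by rwa [dvd_neg]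
      have z4 : ¬ (p : ℤ) ∣ -(s₂ : ℤ) := by rwa [dvd_neg]
      simp [z _ _ z1, z _ _ z2, z _ _ z3, z _ _ z4]
    · have z : ∀ a b : ℤ, ¬ (p : ℤ) ∣ a → GS N₁ N₂ μ₁ μ₃ k h a b = 0 := by
        intro a b hb
        exact GS_zero _ _ _ _ _ hN₁ hk _ _ _ p hp hp2 hpN₁ hpk hm hph hb
      have z1 := hpx r₁ N₁ hpN₁ hr₁c
      have z2 := hpx s₁ N₁ hpN₁ hs₁c
      have z3 : ¬ (p : ℤ) ∣ -(r₁ : ℤ) := by rwa [dvd_neg]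
      have z4 : ¬ (p : ℤ) ∣ -(s₁ : ℤ) := by rwa [dvd_neg]
      simp [z _ _ z1, z _ _ z2, z _ _ z3, z _ _ z4]
end

section
/- Let F : ℝ² → ℝ be a Schwartz function and let α = (α₁,α₂) ∈ [0,1)². Then for every N ∈ ℕ, as t → 0⁺, Σ_{n∈ℕ₀²} F((n₁+α₁)t, (n₂+α₂)t) = (1/t²)∫₀^∞∫₀^∞ F(x₁,x₂) dx₁dx₂ − Σ_{m=0}^{N} [B_{m+1}(α₂)/(m+1)!] (∫₀^∞ ∂₂^m F(x,0) dx) t^{m−1} − Σ_{m=0}^{N} [B_{m+1}(α₁)/(m+1)!] (∫₀^∞ ∂₁^m F(0,x) dx) t^{m−1} + Σ_{m₁=0}^{N} Σ_{m₂=0}^{N} [B_{m₁+1}(α₁)B_{m₂+1}(α₂)/((m₁+1)!(m₂+1)!)] ∂₁^{m₁}∂₂^{m₂}F(0,0) t^{m₁+m₂} + O(t^N). -/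
open MeasureTheory Filter Topology Asymptotics Polynomial

noncomputable def bc (m : ℕ) (a : ℝ) : ℝ := bernoulliFun (m + 1) a / (Nat.factorial (m + 1) : ℝ)

lemma bc_zero_deriv (a : ℝ) : HasDerivAt (bc 0) 1 a := by
  have := (hasDerivAt_bernoulliFun 1 a).div_const ((Nat.factorial 1 : ℕ) : ℝ)
  have e : bc 0 = fun x => bernoulliFun 1 x / ((Nat.factorial 1 : ℕ) : ℝ) := rfl
  rw [e]
  convert! this using 1
  simp

lemma bc_succ_deriv (m : ℕ) (a : ℝ) : HasDerivAt (bc (m + 1)) (bc m a) a := by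
  have := (hasDerivAt_bernoulliFun (m + 1 + 1) a).div_const ((Nat.factorial (m + 1 + 1) : ℕ) : ℝ)
  convert! this using 1
  rw [Nat.factorial_succ (m + 1)]
  unfold bc
  have h1 : ((m + 1 + 1 : ℕ) : ℝ) ≠ 0 := by positivity
  have h2 : ((Nat.factorial (m + 1) : ℕ) : ℝ) ≠ 0 := by positivity
  push_cast at *
  field_simp
  try simp

lemma bc_cont (m : ℕ) : Continuous (bc m) := by
  cases m with
  | zero => exact continuous_iff_continuousAt.2 fun a => (bc_zero_deriv a).continuousAt
  | succ m => exact continuous_iff_continuousAt.2 fun a => (bc_succ_deriv m a).continuousAt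

lemma bc_integral (m : ℕ) : ∫ a in (0:ℝ)..1, bc m a = 0 := by
  unfold bc
  rw [intervalIntegral.integral_div, integral_bernoulliFun_eq_zero (by omega), zero_div]

def Chain (f : ℕ → ℝ → ℝ) : Prop := ∀ k x, HasDerivAt (f k) (f (k + 1) x) x

lemma Chain.cont {f : ℕ → ℝ → ℝ} (hf : Chain f) (k : ℕ) : Continuous (f k) :=
  continuous_iff_continuousAt.2 fun a => (hf k a).continuousAt

lemma Chain.iteratedDeriv {f : ℕ → ℝ → ℝ} (hf : Chain f) (k : ℕ) :
    iteratedDeriv k (f 0) = f k := by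
  induction k with
  | zero => simp
  | succ k ih =>
    rw [iteratedDeriv_succ, ih]
    ext x
    exact (hf k x).deriv

noncomputable def EM (M : ℕ) (f : ℕ → ℝ → ℝ) (a : ℝ) : ℝ :=
  f 0 a - (∫ x in (0:ℝ)..1, f 0 x) - ∑ m ∈ Finset.range M, bc m a * (f m 1 - f m 0)

lemma EM_deriv {f : ℕ → ℝ → ℝ} (hf : Chain f) (M : ℕ) (a : ℝ) :
    HasDerivAt (EM (M + 1) f) (EM M (fun k => f (k + 1)) a) a := by
  have h1 : ∫ x in (0:ℝ)..1, f 1 x = f 0 1 - f 0 0 :=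
    intervalIntegral.integral_eq_sub_of_hasDerivAt (fun x _ => hf 0 x)
      ((hf.cont 1).intervalIntegrable _ _)
  have h2 : HasDerivAt (fun a => (∑ m ∈ Finset.range M, bc (m + 1) a * (f (m + 1) 1 - f (m + 1) 0))
      + bc 0 a * (f 0 1 - f 0 0))
      ((∑ m ∈ Finset.range M, bc m a * (f (m + 1) 1 - f (m + 1) 0)) + 1 * (f 0 1 - f 0 0)) a := by
    apply HasDerivAt.add
    · exact HasDerivAt.fun_sum fun m _ => (bc_succ_deriv m a).mul_const _
    · exact (bc_zero_deriv a).mul_const _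
  have h3 := ((hf 0 a).sub_const (∫ x in (0:ℝ)..1, f 0 x)).sub h2
  have e : EM (M + 1) f = ((fun x => f 0 x - ∫ x in (0:ℝ)..1, f 0 x) - fun a =>
      (∑ m ∈ Finset.range M, bc (m + 1) a * (f (m + 1) 1 - f (m + 1) 0))
      + bc 0 a * (f 0 1 - f 0 0)) := by
    ext a
    simp only [EM, Finset.sum_range_succ', Pi.sub_apply]
  rw [e]
  convert! h3 using 1
  simp only [EM, zero_add, h1]
  ring

lemma EM_integral {f : ℕ → ℝ → ℝ} (hf : Chain f) (M : ℕ) :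
    ∫ a in (0:ℝ)..1, EM M f a = 0 := by
  unfold EM
  rw [intervalIntegral.integral_sub, intervalIntegral.integral_sub,
    intervalIntegral.integral_finsetSum]
  · simp [bc_integral]
  · intro i _
    exact ((bc_cont i).mul continuous_const).intervalIntegrable _ _
  · exact (hf.cont 0).intervalIntegrable _ _
  · exact continuous_const.intervalIntegrable _ _
  · exact ((hf.cont 0).sub continuous_const).intervalIntegrable _ _
  · exact (continuous_finsetSum _ fun i _ =>
      ((bc_cont i).mul continuous_const)).intervalIntegrable _ _

lemma mean_bound {E E' : ℝ → ℝ} (hE : ∀ a, HasDerivAt E (E' a) a)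
    (h0 : ∫ a in (0:ℝ)..1, E a = 0) {C : ℝ} (hC : ∀ a ∈ Set.Icc (0:ℝ) 1, |E' a| ≤ C) :
    ∀ a ∈ Set.Icc (0:ℝ) 1, |E a| ≤ C := by
  intro a ha
  have hcont : Continuous E := continuous_iff_continuousAt.2 fun a => (hE a).continuousAt
  have hC0 : 0 ≤ C := (abs_nonneg _).trans (hC a ha)
  have e : E a = ∫ b in (0:ℝ)..1, (E a - E b) := by
    rw [intervalIntegral.integral_sub (continuous_const.intervalIntegrable _ _)
      (hcont.intervalIntegrable _ _), h0]
    simp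
  rw [e]
  have := intervalIntegral.norm_integral_le_of_norm_le_const (a := (0:ℝ)) (b := 1) (C := C)
    (f := fun b => E a - E b) (by
      intro b hb
      rw [Set.uIoc_of_le zero_le_one] at hb
      have hb' : b ∈ Set.Icc (0:ℝ) 1 := ⟨hb.1.le, hb.2⟩
      have := (convex_Icc (0:ℝ) 1).norm_image_sub_le_of_norm_hasDerivWithin_le
        (fun x _ => (hE x).hasDerivWithinAt) hC hb' ha
      refine this.trans ?_
      have : ‖a - b‖ ≤ 1 := by
        rw [Real.norm_eq_abs, abs_le]
        constructor <;> linarith [ha.1, ha.2, hb'.1, hb'.2]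
      nlinarith)
  simpa using this

lemma EM_bound (M : ℕ) : ∀ {f : ℕ → ℝ → ℝ} (_ : Chain f) {C : ℝ}
    (_ : ∀ x ∈ Set.Icc (0:ℝ) 1, |f M x| ≤ C), ∀ a ∈ Set.Icc (0:ℝ) 1, |EM M f a| ≤ 2 * C := by
  induction M with
  | zero =>
    intro f hf C hC a ha
    have h1 := intervalIntegral.norm_integral_le_of_norm_le_const (a := (0:ℝ)) (b := 1) (C := C)
      (f := f 0) (by
        intro b hb
        rw [Set.uIoc_of_le zero_le_one] at hb
        exact hC b ⟨hb.1.le, hb.2⟩)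
    have h2 := hC a ha
    simp only [EM, Finset.range_zero, Finset.sum_empty, sub_zero]
    have := abs_sub (f 0 a) (∫ x in (0:ℝ)..1, f 0 x)
    simp only [Real.norm_eq_abs, sub_zero, abs_one, mul_one] at h1
    linarith
  | succ M ih =>
    intro f hf C hC a ha
    exact mean_bound (EM_deriv hf M) (EM_integral hf (M + 1))
      (ih (f := fun k => f (k + 1)) (fun k x => hf (k + 1) x) hC) a ha

noncomputable def w (x : ℝ) : ℝ := (1 + x ^ 2)⁻¹

lemma w_pos (x : ℝ) : 0 < w x := by unfold w; positivity
lemma w_le_one (x : ℝ) : w x ≤ 1 := by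
  unfold w; exact inv_le_one_of_one_le₀ (by nlinarith [sq_nonneg x])
lemma w_anti {x y : ℝ} (hx : 0 ≤ x) (h : x ≤ y) : w y ≤ w x := by
  unfold w; gcongr

lemma w_int : Integrable w := integrable_inv_one_add_sq

lemma w_tele {t : ℝ} (ht : 0 < t) (ht1 : t ≤ 1) (n : ℕ) :
    w (n * t) ≤ 4 / t * ((1 + n * t)⁻¹ - (1 + (n + 1 : ℕ) * t)⁻¹) := by
  unfold w
  have hn : (0:ℝ) ≤ n * t := by positivity
  push_cast
  set x := (n:ℝ) * t
  have e : ((n:ℝ) + 1) * t = x + t := by simp only [x]; ring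
  rw [e]
  have : 4 / t * ((1 + x)⁻¹ - (1 + (x + t))⁻¹) = 4 / ((1 + x) * (1 + (x + t))) := by
    field_simp; ring
  rw [this, inv_eq_one_div, div_le_div_iff₀ (by positivity) (by positivity)]
  nlinarith [sq_nonneg (x - 1)]

lemma w_sum_le {t : ℝ} (ht : 0 < t) (ht1 : t ≤ 1) (K : ℕ) :
    ∑ n ∈ Finset.range K, w (n * t) ≤ 4 / t := by
  have h : ∑ n ∈ Finset.range K, w (n * t) ≤ 4 / t * (1 - (1 + (K:ℕ) * t)⁻¹) := by
    refine (Finset.sum_le_sum fun n _ => w_tele ht ht1 n).trans ?_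
    rw [← Finset.mul_sum, Finset.sum_range_sub' (fun n : ℕ => (1 + (n:ℝ) * t)⁻¹)]
    simp
  refine h.trans ?_
  have : 0 ≤ (1 + (K:ℝ) * t)⁻¹ := by positivity
  have h4 : 0 ≤ 4 / t := by positivity
  nlinarith

lemma w_summable {t : ℝ} (ht : 0 < t) (ht1 : t ≤ 1) : Summable fun n : ℕ => w (n * t) :=
  summable_of_sum_range_le (fun _ => (w_pos _).le) (w_sum_le ht ht1)

lemma w_tsum_le {t : ℝ} (ht : 0 < t) (ht1 : t ≤ 1) : ∑' n : ℕ, w (n * t) ≤ 4 / t :=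
  Real.tsum_le_of_sum_range_le (fun _ => (w_pos _).le) (w_sum_le ht ht1)

lemma w_tendsto {t : ℝ} (ht : 0 < t) : Tendsto (fun K : ℕ => w (K * t)) atTop (𝓝 0) := by
  unfold w
  apply Tendsto.inv_tendsto_atTop
  apply tendsto_atTop_add_const_left
  have : Tendsto (fun K : ℕ => (K:ℝ) * t) atTop atTop :=
    tendsto_natCast_atTop_atTop.atTop_mul_const ht
  exact (tendsto_pow_atTop two_ne_zero).comp this

lemma w_shift {t a : ℝ} (ht : 0 < t) (ha : 0 ≤ a) (n : ℕ) : w ((n + a) * t) ≤ w (n * t) :=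
  w_anti (by positivity) (by nlinarith)

/-- one-dimensional Euler–Maclaurin -/
lemma em_one {g : ℕ → ℝ → ℝ} (hg : Chain g) (hb : ∀ k, ∃ C, ∀ x, |g k x| ≤ C * w x)
    (M : ℕ) {C : ℝ} (hC : ∀ x, |g (M + 1) x| ≤ C * w x) {a : ℝ} (ha : a ∈ Set.Icc (0:ℝ) 1)
    {t : ℝ} (ht : 0 < t) (ht1 : t ≤ 1) :
    Summable (fun n : ℕ => g 0 ((n + a) * t)) ∧
    |(∑' n : ℕ, g 0 ((n + a) * t)) - t⁻¹ * (∫ x in Set.Ioi (0:ℝ), g 0 x)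
      + ∑ m ∈ Finset.range (M + 1), bc m a * g m 0 * t ^ m| ≤ 8 * C * t ^ M := by
  have hsum : Summable (fun n : ℕ => g 0 ((n + a) * t)) := by
    obtain ⟨C₀, h0⟩ := hb 0
    have hC0 : 0 ≤ C₀ := by
      have := (abs_nonneg _).trans (h0 0)
      have h2 := w_pos 0
      by_contra h
      nlinarith
    refine Summable.of_norm_bounded ((w_summable ht ht1).mul_left C₀) fun n => (h0 _).trans ?_
    exact mul_le_mul_of_nonneg_left (w_shift ht ha.1 n) hC0
  refine ⟨hsum, ?_⟩
  have hC0 : 0 ≤ C := by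
    have := (abs_nonneg _).trans (hC 0)
    have h2 := w_pos 0
    by_contra h
    nlinarith
  let f : ℕ → ℕ → ℝ → ℝ := fun n k u => t ^ k * g k ((n + u) * t)
  have hf : ∀ n, Chain (f n) := by
    intro n k u
    have h1 : HasDerivAt (fun u : ℝ => ((n:ℝ) + u) * t) (1 * t) u :=
      ((hasDerivAt_id' u).const_add (n:ℝ)).mul_const t
    have h2 := ((hg k (((n:ℝ) + u) * t)).comp u h1).const_mul (t ^ k)
    convert! h2 using 1
    simp only [f]; ring
  have hE : ∀ n : ℕ, |EM (M + 1) (f n) a| ≤ 2 * (t ^ (M + 1) * C) * w (n * t) := by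
    intro n
    have := EM_bound (M + 1) (hf n) (C := t ^ (M + 1) * (C * w (n * t))) (by
      intro x hx
      simp only [f, abs_mul, abs_pow, abs_of_pos ht]
      gcongr
      exact (hC _).trans (mul_le_mul_of_nonneg_left (w_shift ht hx.1 n) hC0)) a ha
    linarith
  have hpart : ∀ K : ℕ, ∑ n ∈ Finset.range K, EM (M + 1) (f n) a =
      (∑ n ∈ Finset.range K, g 0 ((n + a) * t)) - (∫ x in (0:ℝ)..(K:ℝ), g 0 (x * t))
      - ∑ m ∈ Finset.range (M + 1), bc m a * (t ^ m * g m (K * t) - t ^ m * g m 0) := by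
    intro K
    induction K with
    | zero => simp
    | succ K ih =>
      rw [Finset.sum_range_succ, ih, Finset.sum_range_succ (fun n : ℕ => g 0 ((n + a) * t))]
      have hc : Continuous fun x => g 0 (x * t) := (hg.cont 0).comp (by fun_prop)
      have h1 : ∫ x in (0:ℝ)..((K + 1 : ℕ):ℝ), g 0 (x * t) = (∫ x in (0:ℝ)..(K:ℝ), g 0 (x * t))
          + ∫ x in (0:ℝ)..1, g 0 ((K + x) * t) := by
        rw [← intervalIntegral.integral_add_adjacent_intervals (hc.intervalIntegrable 0 K)
          (hc.intervalIntegrable K _)]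
        congr 1
        rw [intervalIntegral.integral_comp_add_left (fun x => g 0 (x * t)) (K:ℝ)]
        simp
      rw [h1]
      simp only [EM, f]
      simp only [pow_zero, one_mul, Nat.cast_add, Nat.cast_one, add_zero]
      simp only [mul_sub, Finset.sum_sub_distrib]
      ring
  have hbd : ∀ K : ℕ, |∑ n ∈ Finset.range K, EM (M + 1) (f n) a| ≤ 8 * C * t ^ M := by
    intro K
    refine (Finset.abs_sum_le_sum_abs _ _).trans ((Finset.sum_le_sum fun n _ => hE n).trans ?_)
    rw [← Finset.mul_sum]
    refine (mul_le_mul_of_nonneg_left (w_sum_le ht ht1 K) (by positivity)).trans (le_of_eq ?_)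
    field_simp
    ring
  have hgi : Integrable (g 0) := by
    obtain ⟨C₀, h0⟩ := hb 0
    exact (w_int.const_mul C₀).mono' (hg.cont 0).aestronglyMeasurable
      (Eventually.of_forall fun x => h0 x)
  have hint : Tendsto (fun K : ℕ => ∫ x in (0:ℝ)..(K:ℝ), g 0 (x * t)) atTop
      (𝓝 (t⁻¹ * ∫ x in Set.Ioi (0:ℝ), g 0 x)) := by
    have h1 := intervalIntegral_tendsto_integral_Ioi (μ := volume) (f := fun x => g 0 (x * t)) 0
      ((hgi.comp_mul_right' ht.ne').integrableOn) tendsto_natCast_atTop_atTop (b := fun K : ℕ => (K:ℝ))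
    rw [integral_comp_mul_right_Ioi _ _ ht] at h1
    simpa using h1
  have hgt : ∀ m, Tendsto (fun K : ℕ => g m (K * t)) atTop (𝓝 0) := by
    intro m
    obtain ⟨C₀, h0⟩ := hb m
    have := (w_tendsto ht).const_mul C₀
    rw [mul_zero] at this
    exact squeeze_zero_norm (fun K => h0 _) this
  have hlim : Tendsto (fun K : ℕ => ∑ n ∈ Finset.range K, EM (M + 1) (f n) a) atTop
      (𝓝 ((∑' n : ℕ, g 0 ((n + a) * t)) - t⁻¹ * (∫ x in Set.Ioi (0:ℝ), g 0 x)
      - ∑ m ∈ Finset.range (M + 1), bc m a * (t ^ m * 0 - t ^ m * g m 0))) := by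
    simp_rw [hpart]
    refine (hsum.hasSum.tendsto_sum_nat.sub hint).sub (tendsto_finsetSum _ fun m _ => ?_)
    exact (((hgt m).const_mul _).sub_const _).const_mul _
  have := le_of_tendsto hlim.abs (Eventually.of_forall hbd)
  have e : ∑ m ∈ Finset.range (M + 1), bc m a * (t ^ m * 0 - t ^ m * g m 0)
      = - ∑ m ∈ Finset.range (M + 1), bc m a * g m 0 * t ^ m := by
    rw [← Finset.sum_neg_distrib]
    exact Finset.sum_congr rfl fun m _ => by ring
  rwa [e, sub_neg_eq_add] at this

noncomputable def dd (v : ℝ × ℝ) (F : SchwartzMap (ℝ × ℝ) ℝ) : ℕ → SchwartzMap (ℝ × ℝ) ℝ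
  | 0 => F
  | k + 1 => LineDeriv.lineDerivOp v (dd v F k)

lemma chain_one (F : SchwartzMap (ℝ × ℝ) ℝ) (y : ℝ) :
    Chain (fun k x => dd (1, 0) F k (x, y)) := by
  intro k x
  have h1 : HasDerivAt (fun x : ℝ => (x, y)) ((1:ℝ), (0:ℝ)) x :=
    (hasDerivAt_id' x).prodMk (hasDerivAt_const x y)
  exact ((dd (1, 0) F k).differentiableAt (x := (x, y))).hasFDerivAt.comp_hasDerivAt x h1

lemma chain_two (F : SchwartzMap (ℝ × ℝ) ℝ) (x : ℝ) :
    Chain (fun k y => dd (0, 1) F k (x, y)) := by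
  intro k y
  have h1 : HasDerivAt (fun y : ℝ => (x, y)) ((0:ℝ), (1:ℝ)) y :=
    (hasDerivAt_const y x).prodMk (hasDerivAt_id' y)
  exact ((dd (0, 1) F k).differentiableAt (x := (x, y))).hasFDerivAt.comp_hasDerivAt y h1

lemma schwartz_bound (F : SchwartzMap (ℝ × ℝ) ℝ) :
    ∃ C, 0 ≤ C ∧ ∀ x y, |F (x, y)| ≤ C * w x * w y := by
  have h := fun p => SchwartzMap.one_add_le_sup_seminorm_apply (𝕜 := ℝ) (m := (4, 0)) (k := 4)
    (n := 0) le_rfl le_rfl F p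
  refine ⟨2 ^ 4 * (Finset.Iic (4, 0)).sup (fun m => SchwartzMap.seminorm ℝ m.1 m.2) F,
    (by positivity : (0:ℝ) ≤ (1 + ‖((0:ℝ),(0:ℝ))‖) ^ 4 * ‖iteratedFDeriv ℝ 0 F (0,0)‖).trans (h _), fun x y => ?_⟩
  have h1 := h (x, y)
  rw [norm_iteratedFDeriv_zero] at h1
  set C := 2 ^ 4 * (Finset.Iic (4, 0)).sup (fun m => SchwartzMap.seminorm ℝ m.1 m.2) F
  have hx : |x| ≤ ‖(x, y)‖ := norm_fst_le (x, y)
  have hy : |y| ≤ ‖(x, y)‖ := norm_snd_le (x, y)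
  have hn : 0 ≤ ‖(x, y)‖ := norm_nonneg _
  have h2 : 1 + x ^ 2 ≤ (1 + ‖(x, y)‖) ^ 2 := by
    nlinarith [sq_abs x, abs_nonneg x]
  have h3 : 1 + y ^ 2 ≤ (1 + ‖(x, y)‖) ^ 2 := by
    nlinarith [sq_abs y, abs_nonneg y]
  have h4 : (1 + x ^ 2) * (1 + y ^ 2) ≤ (1 + ‖(x, y)‖) ^ 4 := by
    calc _ ≤ (1 + ‖(x, y)‖) ^ 2 * (1 + ‖(x, y)‖) ^ 2 := by gcongr
      _ = _ := by ring
  have h5 : (1 + x ^ 2) * (1 + y ^ 2) * |F (x, y)| ≤ C :=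
    (mul_le_mul_of_nonneg_right h4 (abs_nonneg _)).trans h1
  unfold w
  rw [mul_assoc, ← mul_inv, ← div_eq_mul_inv, le_div_iff₀ (by positivity)]
  linarith

lemma bound_one (F : SchwartzMap (ℝ × ℝ) ℝ) (y : ℝ) (k : ℕ) :
    ∃ C, ∀ x, |dd (1, 0) F k (x, y)| ≤ C * w x := by
  obtain ⟨C, _, h⟩ := schwartz_bound (dd (1, 0) F k)
  exact ⟨C * w y, fun x => (h x y).trans (le_of_eq (by ring))⟩

lemma bound_two (F : SchwartzMap (ℝ × ℝ) ℝ) (x : ℝ) (k : ℕ) :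
    ∃ C, ∀ y, |dd (0, 1) F k (x, y)| ≤ C * w y := by
  obtain ⟨C, _, h⟩ := schwartz_bound (dd (0, 1) F k)
  exact ⟨C * w x, fun y => h x y⟩

noncomputable def GG (F : SchwartzMap (ℝ × ℝ) ℝ) (k : ℕ) (x : ℝ) : ℝ :=
  ∫ y in Set.Ioi (0:ℝ), dd (1, 0) F k (x, y)

lemma slice_int (F : SchwartzMap (ℝ × ℝ) ℝ) (x : ℝ) : Integrable (fun y => F (x, y)) := by
  obtain ⟨C, _, h⟩ := schwartz_bound F
  exact (w_int.const_mul (C * w x)).mono'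
    (F.continuous.comp (by fun_prop)).aestronglyMeasurable (Eventually.of_forall fun y => h x y)

lemma GG_chain (F : SchwartzMap (ℝ × ℝ) ℝ) : Chain (GG F) := by
  intro k x
  obtain ⟨C, hC, h⟩ := schwartz_bound (dd (1, 0) F (k + 1))
  refine (hasDerivAt_integral_of_dominated_loc_of_deriv_le
    (μ := volume.restrict (Set.Ioi (0:ℝ))) (s := Set.univ) (bound := fun y => C * w y)
    (F := fun x y => dd (1, 0) F k (x, y)) (F' := fun x y => dd (1, 0) F (k + 1) (x, y))
    univ_mem ?_ ?_ ?_ ?_ ?_ ?_).2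
  · exact Eventually.of_forall fun x => (slice_int _ x).integrableOn.aestronglyMeasurable
  · exact (slice_int _ x).integrableOn
  · exact (slice_int _ x).integrableOn.aestronglyMeasurable
  · refine Eventually.of_forall fun y x _ => (h x y).trans ?_
    have := w_le_one x
    have h2 := (w_pos y).le
    gcongr
    nlinarith
  · exact (w_int.const_mul C).integrableOn
  · exact Eventually.of_forall fun y x _ => chain_one F y k x

lemma GG_bound (F : SchwartzMap (ℝ × ℝ) ℝ) (k : ℕ) : ∃ C, ∀ x, |GG F k x| ≤ C * w x := by
  obtain ⟨C, hC, h⟩ := schwartz_bound (dd (1, 0) F k)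
  refine ⟨C * ∫ y in Set.Ioi (0:ℝ), w y, fun x => ?_⟩
  refine (norm_integral_le_of_norm_le (f := fun y => dd (1, 0) F k (x, y)) (w_int.const_mul (C * w x)).integrableOn
    (Eventually.of_forall fun y => h x y)).trans (le_of_eq ?_)
  rw [integral_const_mul]
  ring

lemma GG_fubini (F : SchwartzMap (ℝ × ℝ) ℝ) :
    ∫ x in Set.Ioi (0:ℝ), GG F 0 x =
      ∫ x₂ in Set.Ioi (0 : ℝ), ∫ x₁ in Set.Ioi (0 : ℝ), F (x₁, x₂) := by
  unfold GG
  simp only [dd]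
  refine integral_integral_swap (f := fun x y => F (x, y)) ?_
  rw [Measure.prod_restrict]
  exact (F.integrable (μ := (volume : Measure ℝ).prod volume)).integrableOn

lemma em_two (F : SchwartzMap (ℝ × ℝ) ℝ) {a b : ℝ} (ha : a ∈ Set.Icc (0:ℝ) 1)
    (hb : b ∈ Set.Icc (0:ℝ) 1) (N : ℕ) : ∃ K, ∀ t : ℝ, 0 < t → t ≤ 1 →
    |(∑' n : ℕ × ℕ, F (((n.1 : ℝ) + a) * t, ((n.2 : ℝ) + b) * t))
      - t⁻¹ * (t⁻¹ * ∫ x in Set.Ioi (0:ℝ), GG F 0 x)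
      + t⁻¹ * (∑ m ∈ Finset.range (N + 2), bc m a * GG F m 0 * t ^ m)
      + (∑ m ∈ Finset.range (N + 2), bc m b * t ^ m *
          (t⁻¹ * ∫ x in Set.Ioi (0:ℝ), dd (0, 1) F m (x, 0)))
      - (∑ m ∈ Finset.range (N + 2), bc m b * t ^ m *
          (∑ k ∈ Finset.range (N + 2), bc k a * dd (1, 0) (dd (0, 1) F m) k (0, 0) * t ^ k))|
      ≤ K * t ^ N := by
  obtain ⟨C₀, hC₀, h0⟩ := schwartz_bound F
  obtain ⟨C, hC, h1⟩ := schwartz_bound (dd (0, 1) F (N + 1 + 1))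
  obtain ⟨C', h2⟩ := GG_bound F (N + 1 + 1)
  choose c hc using fun m => bound_one (dd (0, 1) F m) 0 (N + 1 + 1)
  refine ⟨32 * C + 8 * C' + ∑ m ∈ Finset.range (N + 2), |bc m b| * (8 * c m), fun t ht ht1 => ?_⟩
  have hS : Summable (fun n : ℕ × ℕ => F (((n.1 : ℝ) + a) * t, ((n.2 : ℝ) + b) * t)) := by
    have hw := (w_summable ht ht1).mul_of_nonneg (w_summable ht ht1) (fun _ => (w_pos _).le)
      (fun _ => (w_pos _).le)
    refine Summable.of_norm_bounded (hw.mul_left C₀) fun n => (h0 _ _).trans ?_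
    rw [mul_assoc]
    have e1 := w_shift ht ha.1 n.1
    have e2 := w_shift ht hb.1 n.2
    have := (w_pos ((n.1 + a) * t)).le
    have := (w_pos ((n.2 + b) * t)).le
    have := (w_pos (n.1 * t)).le
    gcongr
  -- inner remainder
  let R : ℝ → ℝ := fun x => (∑' n : ℕ, F (x, (n + b) * t)) - t⁻¹ * GG F 0 x
    + ∑ m ∈ Finset.range (N + 2), bc m b * dd (0, 1) F m (x, 0) * t ^ m
  have hR : ∀ x, |R x| ≤ 8 * (C * w x) * t ^ (N + 1) := fun x =>
    (em_one (chain_two F x) (bound_two F x) (N + 1) (C := C * w x) (fun y => h1 x y) hb ht ht1).2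
  have hG := em_one (GG_chain F) (GG_bound F) (N + 1) h2 ha ht ht1
  have hH := fun m => em_one (chain_one (dd (0, 1) F m) 0) (bound_one (dd (0, 1) F m) 0) (N + 1)
    (hc m) ha ht ht1
  simp only [dd] at hH
  set SG := ∑' n : ℕ, GG F 0 ((n + a) * t)
  set SH := fun m => ∑' n : ℕ, dd (0, 1) F m ((n + a) * t, 0)
  have hsumR : HasSum (fun n : ℕ => R ((n + a) * t))
      ((∑' n : ℕ × ℕ, F (((n.1 : ℝ) + a) * t, ((n.2 : ℝ) + b) * t)) - t⁻¹ * SG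
        + ∑ m ∈ Finset.range (N + 2), bc m b * SH m * t ^ m) := by
    refine ((HasSum.sub ?_ (hG.1.hasSum.mul_left _))).add (hasSum_sum fun m _ =>
      (((hH m).1.hasSum.mul_left _).mul_right _))
    rw [hS.tsum_prod]
    exact hS.prod.hasSum
  have hA : |(∑' n : ℕ × ℕ, F (((n.1 : ℝ) + a) * t, ((n.2 : ℝ) + b) * t)) - t⁻¹ * SG
        + ∑ m ∈ Finset.range (N + 2), bc m b * SH m * t ^ m| ≤ 32 * C * t ^ N := by
    rw [← hsumR.tsum_eq]
    have hws := (w_summable ht ht1).mul_left (8 * C * t ^ (N + 1))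
    refine (tsum_of_norm_bounded (f := fun n : ℕ => R ((n + a) * t)) hws.hasSum fun n => (hR _).trans ?_).trans ?_
    · have e1 := w_shift ht ha.1 n
      calc 8 * (C * w ((n + a) * t)) * t ^ (N + 1) ≤ 8 * (C * w (n * t)) * t ^ (N + 1) := by gcongr
        _ = _ := by ring
    · rw [tsum_mul_left]
      refine (mul_le_mul_of_nonneg_left (w_tsum_le ht ht1) (by positivity)).trans (le_of_eq ?_)
      field_simp
      ring
  have hB := hG.2
  set B := SG - t⁻¹ * (∫ x in Set.Ioi (0:ℝ), GG F 0 x)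
      + ∑ m ∈ Finset.range (N + 1 + 1), bc m a * GG F m 0 * t ^ m with hBd
  have hBm := fun m => (hH m).2
  set Bm := fun m => SH m - t⁻¹ * (∫ x in Set.Ioi (0:ℝ), dd (0, 1) F m (x, 0))
      + ∑ k ∈ Finset.range (N + 1 + 1), bc k a * dd (1, 0) (dd (0, 1) F m) k (0, 0) * t ^ k with hBmd
  have hB' : |t⁻¹ * B| ≤ 8 * C' * t ^ N := by
    rw [abs_mul, abs_of_pos (inv_pos.2 ht), inv_mul_le_iff₀ ht]
    exact hB.trans (le_of_eq (by ring))
  have hBm' : |∑ m ∈ Finset.range (N + 2), bc m b * t ^ m * Bm m| ≤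
      (∑ m ∈ Finset.range (N + 2), |bc m b| * (8 * c m)) * t ^ N := by
    refine (Finset.abs_sum_le_sum_abs _ _).trans ?_
    rw [Finset.sum_mul]
    refine Finset.sum_le_sum fun m _ => ?_
    have hb1 : |Bm m| ≤ 8 * c m * t ^ (N + 1) := hBm m
    have hcm : 0 ≤ 8 * c m := by
      have := (abs_nonneg _).trans hb1
      by_contra hneg
      have : 0 < t ^ (N + 1) := by positivity
      nlinarith
    rw [abs_mul, abs_mul, mul_assoc, mul_assoc]
    refine mul_le_mul_of_nonneg_left ?_ (abs_nonneg _)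
    have e1 : |t ^ m| ≤ 1 := by
      rw [abs_of_pos (by positivity)]
      exact pow_le_one₀ ht.le ht1
    have e2 : t ^ (N + 1) ≤ t ^ N := pow_le_pow_of_le_one ht.le ht1 (Nat.le_succ N)
    calc |t ^ m| * |Bm m| ≤ 1 * |Bm m| := by gcongr
      _ ≤ 8 * c m * t ^ (N + 1) := by rw [one_mul]; exact hb1
      _ ≤ _ := by gcongr
  have key : ∀ {x y z T X Y Z : ℝ}, T = x + y - z → |x| ≤ X → |y| ≤ Y → |z| ≤ Z →
      |T| ≤ X + Y + Z := by
    intro x y z T X Y Z hT hx hy hz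
    rw [hT]
    rw [abs_le] at *
    constructor <;> linarith [hx.1, hx.2, hy.1, hy.2, hz.1, hz.2]
  rw [add_mul, add_mul]
  refine key ?_ hA hB' hBm'
  simp only [hBd, hBmd]
  simp only [mul_add, mul_sub, Finset.sum_add_distrib, Finset.sum_sub_distrib]
  have e : ∑ m ∈ Finset.range (N + 2), bc m b * SH m * t ^ m
      = ∑ m ∈ Finset.range (N + 2), bc m b * t ^ m * SH m :=
    Finset.sum_congr rfl fun m _ => by ring
  rw [e]
  ring

lemma mono_bigO (c : ℝ) {N j : ℕ} (h : N ≤ j) :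
    (fun t : ℝ => c * t ^ j) =O[𝓝[>] (0 : ℝ)] fun t => t ^ N := by
  refine IsBigO.of_bound |c| ?_
  filter_upwards [Ioc_mem_nhdsGT (zero_lt_one' ℝ)] with t ht
  rw [norm_mul, Real.norm_eq_abs, Real.norm_of_nonneg (pow_nonneg ht.1.le _),
    Real.norm_of_nonneg (pow_nonneg ht.1.le _)]
  exact mul_le_mul_of_nonneg_left (pow_le_pow_of_le_one ht.1.le ht.2 h) (abs_nonneg _)

theorem euler_maclaurin_two_dim (F : SchwartzMap (ℝ × ℝ) ℝ) (α₁ α₂ : ℝ)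
    (hα₁ : α₁ ∈ Set.Ico (0 : ℝ) 1) (hα₂ : α₂ ∈ Set.Ico (0 : ℝ) 1) (N : ℕ) :
    (fun t : ℝ =>
      (∑' n : ℕ × ℕ, F (((n.1 : ℝ) + α₁) * t, ((n.2 : ℝ) + α₂) * t)) -
        (1 / t ^ 2) * (∫ x₂ in Set.Ioi (0 : ℝ), ∫ x₁ in Set.Ioi (0 : ℝ), F (x₁, x₂)) +
        (∑ m ∈ Finset.range (N + 1),
          ((Polynomial.aeval α₂) (Polynomial.bernoulli (m + 1)) /
              (Nat.factorial (m + 1) : ℝ)) *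
            (∫ x in Set.Ioi (0 : ℝ), iteratedDeriv m (fun y => F (x, y)) 0) *
            t ^ ((m : ℤ) - 1)) +
        (∑ m ∈ Finset.range (N + 1),
          ((Polynomial.aeval α₁) (Polynomial.bernoulli (m + 1)) /
              (Nat.factorial (m + 1) : ℝ)) *
            (∫ x in Set.Ioi (0 : ℝ), iteratedDeriv m (fun z => F (z, x)) 0) *
            t ^ ((m : ℤ) - 1)) -
        ∑ m₁ ∈ Finset.range (N + 1), ∑ m₂ ∈ Finset.range (N + 1),
          ((Polynomial.aeval α₁) (Polynomial.bernoulli (m₁ + 1)) *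
              (Polynomial.aeval α₂) (Polynomial.bernoulli (m₂ + 1)) /
              ((Nat.factorial (m₁ + 1) : ℝ) * (Nat.factorial (m₂ + 1) : ℝ))) *
            iteratedDeriv m₁ (fun z => iteratedDeriv m₂ (fun y => F (z, y)) 0) 0 *
            t ^ (m₁ + m₂)) =O[𝓝[>] (0 : ℝ)] fun t => t ^ N := by
  have hI2 : ∀ m x, iteratedDeriv m (fun y => F (x, y)) 0 = dd (0, 1) F m (x, 0) := fun m x =>
    congrFun ((chain_two F x).iteratedDeriv m) 0
  have hI1 : ∀ m x, iteratedDeriv m (fun z => F (z, x)) 0 = dd (1, 0) F m (0, x) := fun m x =>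
    congrFun ((chain_one F x).iteratedDeriv m) 0
  have hI12 : ∀ k m, iteratedDeriv k (fun z => dd (0, 1) F m (z, 0)) 0
      = dd (1, 0) (dd (0, 1) F m) k (0, 0) := fun k m =>
    congrFun ((chain_one (dd (0, 1) F m) 0).iteratedDeriv k) 0
  simp only [hI2, hI1, hI12]
  have hbc : ∀ (a : ℝ) (m : ℕ), (Polynomial.aeval a) (Polynomial.bernoulli (m + 1)) /
      (Nat.factorial (m + 1) : ℝ) = bc m a := by
    intro a m
    simp [bc, bernoulliFun, Polynomial.aeval_def, Polynomial.eval_map]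
  simp only [mul_div_mul_comm, hbc]
  obtain ⟨K, hK⟩ := em_two F (Set.Ico_subset_Icc_self hα₁) (Set.Ico_subset_Icc_self hα₂) N
  rw [GG_fubini] at hK
  have hT : (fun t : ℝ => (∑' n : ℕ × ℕ, F (((n.1 : ℝ) + α₁) * t, ((n.2 : ℝ) + α₂) * t))
      - t⁻¹ * (t⁻¹ * ∫ x₂ in Set.Ioi (0 : ℝ), ∫ x₁ in Set.Ioi (0 : ℝ), F (x₁, x₂))
      + t⁻¹ * (∑ m ∈ Finset.range (N + 2), bc m α₁ * GG F m 0 * t ^ m)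
      + (∑ m ∈ Finset.range (N + 2), bc m α₂ * t ^ m *
          (t⁻¹ * ∫ x in Set.Ioi (0:ℝ), dd (0, 1) F m (x, 0)))
      - (∑ m ∈ Finset.range (N + 2), bc m α₂ * t ^ m *
          (∑ k ∈ Finset.range (N + 2), bc k α₁ * dd (1, 0) (dd (0, 1) F m) k (0, 0) * t ^ k)))
      =O[𝓝[>] (0 : ℝ)] fun t => t ^ N := by
    refine IsBigO.of_bound K ?_
    filter_upwards [Ioc_mem_nhdsGT (zero_lt_one' ℝ)] with t ht
    rw [Real.norm_eq_abs, Real.norm_of_nonneg (pow_nonneg ht.1.le _)]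
    exact hK t ht.1 ht.2
  have h1 := mono_bigO (bc (N + 1) α₁ * GG F (N + 1) 0) (le_refl N)
  have h2 := mono_bigO (bc (N + 1) α₂ * ∫ x in Set.Ioi (0:ℝ), dd (0, 1) F (N + 1) (x, 0))
    (le_refl N)
  have h3 : (fun t : ℝ => ∑ k ∈ Finset.range (N + 2), (bc (N + 1) α₂ * bc k α₁ *
      dd (1, 0) (dd (0, 1) F (N + 1)) k (0, 0)) * t ^ (N + 1 + k))
      =O[𝓝[>] (0 : ℝ)] fun t => t ^ N :=
    IsBigO.fun_sum fun k _ => mono_bigO _ (by omega)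
  have h4 : (fun t : ℝ => ∑ m ∈ Finset.range (N + 1), (bc m α₂ * bc (N + 1) α₁ *
      dd (1, 0) (dd (0, 1) F m) (N + 1) (0, 0)) * t ^ (m + (N + 1)))
      =O[𝓝[>] (0 : ℝ)] fun t => t ^ N :=
    IsBigO.fun_sum fun k _ => mono_bigO _ (by omega)
  refine ((((hT.sub h1).sub h2).add h3).add h4).congr' ?_ EventuallyEq.rfl
  filter_upwards [self_mem_nhdsWithin] with t ht
  have ht0 : t ≠ 0 := (Set.mem_Ioi.1 ht).ne'
  have hz : ∀ m : ℕ, t ^ ((m : ℤ) - 1) = t ^ m * t⁻¹ := fun m => by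
    rw [zpow_sub_one₀ ht0, zpow_natCast]
  simp only [hz]
  have e1 : t⁻¹ * (∑ m ∈ Finset.range (N + 2), bc m α₁ * GG F m 0 * t ^ m)
      = (∑ m ∈ Finset.range (N + 1), bc m α₁ *
        (∫ x in Set.Ioi (0:ℝ), dd (1, 0) F m (0, x)) * (t ^ m * t⁻¹))
        + bc (N + 1) α₁ * GG F (N + 1) 0 * t ^ N := by
    rw [Finset.sum_range_succ, mul_add, Finset.mul_sum]
    congr 1
    · exact Finset.sum_congr rfl fun m _ => by simp only [GG]; ring
    · field_simp
      ring
  have e2 : (∑ m ∈ Finset.range (N + 2), bc m α₂ * t ^ m *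
          (t⁻¹ * ∫ x in Set.Ioi (0:ℝ), dd (0, 1) F m (x, 0)))
      = (∑ m ∈ Finset.range (N + 1), bc m α₂ *
        (∫ x in Set.Ioi (0:ℝ), dd (0, 1) F m (x, 0)) * (t ^ m * t⁻¹))
        + bc (N + 1) α₂ * (∫ x in Set.Ioi (0:ℝ), dd (0, 1) F (N + 1) (x, 0)) * t ^ N := by
    rw [Finset.sum_range_succ]
    congr 1
    · exact Finset.sum_congr rfl fun m _ => by ring
    · field_simp
      ring
  have e3 : (∑ m ∈ Finset.range (N + 2), bc m α₂ * t ^ m *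
          (∑ k ∈ Finset.range (N + 2), bc k α₁ * dd (1, 0) (dd (0, 1) F m) k (0, 0) * t ^ k))
      = (∑ k ∈ Finset.range (N + 1), ∑ m ∈ Finset.range (N + 1), bc k α₁ * bc m α₂ *
          dd (1, 0) (dd (0, 1) F m) k (0, 0) * t ^ (k + m))
        + (∑ k ∈ Finset.range (N + 2), (bc (N + 1) α₂ * bc k α₁ *
      dd (1, 0) (dd (0, 1) F (N + 1)) k (0, 0)) * t ^ (N + 1 + k))
        + ∑ m ∈ Finset.range (N + 1), (bc m α₂ * bc (N + 1) α₁ *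
      dd (1, 0) (dd (0, 1) F m) (N + 1) (0, 0)) * t ^ (m + (N + 1)) := by
    rw [Finset.sum_comm, Finset.sum_range_succ (n := N + 1)]
    have f1 : ∀ m, bc m α₂ * t ^ m *
          (∑ k ∈ Finset.range (N + 2), bc k α₁ * dd (1, 0) (dd (0, 1) F m) k (0, 0) * t ^ k)
        = ∑ k ∈ Finset.range (N + 2), bc m α₂ * bc k α₁ *
            dd (1, 0) (dd (0, 1) F m) k (0, 0) * t ^ (m + k) := fun m => by
      rw [Finset.mul_sum]
      exact Finset.sum_congr rfl fun k _ => by ring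
    simp only [f1]
    rw [add_right_comm, ← Finset.sum_add_distrib]
    congr 1
    refine Finset.sum_congr rfl fun m _ => ?_
    rw [Finset.sum_range_succ (n := N + 1)]
    congr 1
    exact Finset.sum_congr rfl fun k _ => by rw [add_comm k m]; ring
  rw [e1, e2, e3]
  ring
end
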